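/- arXiv:2601.16053 — 8 statements merged into one kernel-verified Lean document; each statement's English description precedes it below -/
import Mathlib

section
/- Let 𝒜 be a unital C*-algebra and let p ≥ 1 be a real number. Then there exists a constant c > 0 such that for all positive elements A, B of 𝒜 one has ‖A^p − B^p‖ ≤ c · ‖A^{p−1}·(A − B) + (A − B)·B^{p−1}‖, where the real powers of positive elements are defined via the continuous functional calculus. -/
open scoped NNReal

/-!
For strictly positive `a, b` put `D s = a ^ s * x * b ^ (-s) - a ^ (-s) * x * b ^ s`. Since
`a ^ t * D s * b ^ (-t) + a ^ (-t) * D s * b ^ t = D (s + t) + D (s - t)`, the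
Corach–Porta–Recht inequality `2‖y‖ ≤ ‖u y v⁻¹ + (u⋆)⁻¹ y v⋆‖` makes `s ↦ ‖D s‖` midpoint convex,
hence convex. It is even and vanishes at `0`, so `‖D s‖` is bounded by a multiple of
`‖D s - D (s - 1)‖` as soon as `1 / 2 ≤ s`. For `x = a ^ (p / 2) * b ^ (p / 2)` and `s = p / 2`, the
former is `‖a ^ p - b ^ p‖` and the difference `D s - D (s - 1)` is
`a ^ (p - 1) * (a - b) + (a - b) * b ^ (p - 1)`. Density of the strictly positive elements
in the positive cone gives the general case.
-/

section MidpointConvexity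

variable {E : Type*} [AddCommGroup E] [Module ℝ E] [TopologicalSpace E]
  [IsTopologicalAddGroup E] [ContinuousSMul ℝ E]

theorem Icc_subset_of_isClosed_of_midpoint_mem {s : Set ℝ} (hs : IsClosed s)
    (hmid : ∀ x ∈ s, ∀ y ∈ s, midpoint ℝ x y ∈ s) {x y : ℝ} (hx : x ∈ s) (hy : y ∈ s) :
    Set.Icc x y ⊆ s := by
  rintro z ⟨hxz, hzy⟩
  obtain ⟨a, ⟨has, hxa, haz⟩, ha⟩ :=
    (isCompact_Icc.inter_left hs).exists_isGreatest ⟨x, hx, Set.left_mem_Icc.2 hxz⟩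
  obtain ⟨b, ⟨hbs, hzb, hby⟩, hb⟩ :=
    (isCompact_Icc.inter_left hs).exists_isLeast ⟨y, hy, Set.right_mem_Icc.2 hzy⟩
  have hab : a ≤ b := haz.trans hzb
  have hm := hmid a has b hbs
  obtain hmz | hzm := le_total (midpoint ℝ a b) z
  · have hba : b ≤ a :=
      midpoint_le_left.1 <| ha ⟨hm, hxa.trans (left_le_midpoint.2 hab), hmz⟩
    exact haz.antisymm (hzb.trans hba) ▸ has
  · have hba : b ≤ a :=
      right_le_midpoint.1 <| hb ⟨hm, hzm, (midpoint_le_right.2 hab).trans hby⟩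
    exact hzb.antisymm (hba.trans haz) ▸ hbs

theorem convex_of_isClosed_of_midpoint_mem {s : Set E} (hs : IsClosed s)
    (hmid : ∀ x ∈ s, ∀ y ∈ s, midpoint ℝ x y ∈ s) : Convex ℝ s := by
  refine convex_iff_segment_subset.2 fun x hx y hy ↦ ?_
  rw [segment_eq_image_lineMap, Set.image_subset_iff]
  refine Icc_subset_of_isClosed_of_midpoint_mem (hs.preimage AffineMap.lineMap_continuous)
    (fun t ht u hu ↦ ?_) (by simpa) (by simpa)
  simpa using hmid _ ht _ hu

theorem convexOn_univ_of_lowerSemicontinuous_of_midpoint_le {f : E → ℝ}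
    (hf : LowerSemicontinuous f)
    (hmid : ∀ x y, f (midpoint ℝ x y) ≤ midpoint ℝ (f x) (f y)) : ConvexOn ℝ Set.univ f := by
  rw [convexOn_iff_convex_epigraph]
  simp only [Set.mem_univ, true_and]
  exact convex_of_isClosed_of_midpoint_mem hf.isClosed_epigraph fun p hp q hq ↦
    (hmid p.1 q.1).trans (midpoint_le_midpoint hp hq)

variable {F : Type*} [SeminormedAddCommGroup F]

theorem convexOn_univ_norm_of_two_mul_norm_le {f : E → F} (hf : Continuous f)
    (hmid : ∀ x y, 2 * ‖f x‖ ≤ ‖f (x + y) + f (x - y)‖) :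
    ConvexOn ℝ Set.univ fun x ↦ ‖f x‖ := by
  refine convexOn_univ_of_lowerSemicontinuous_of_midpoint_le hf.norm.lowerSemicontinuous
    fun x y ↦ ?_
  have h := hmid (midpoint ℝ x y) (midpoint ℝ x y - y)
  rw [sub_sub_cancel, add_sub, midpoint_add_self, add_sub_cancel_right] at h
  rw [midpoint_eq_smul_add ℝ ‖f x‖, invOf_eq_inv, smul_eq_mul]
  linarith [norm_add_le (f x) (f y)]

theorem mul_norm_le_mul_norm_of_odd {f : ℝ → F} (hf : Continuous f) (hodd : Function.Odd f)
    (hmid : ∀ s t, 2 * ‖f s‖ ≤ ‖f (s + t) + f (s - t)‖) {s t : ℝ} (hs : 0 ≤ s) (hst : s ≤ t) :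
    t * ‖f s‖ ≤ s * ‖f t‖ := by
  have norm_map_zero : ‖f 0‖ = 0 := by
    have add_self : f 0 + f 0 = 0 := by simpa [eq_neg_iff_add_eq_zero] using hodd 0
    have h := hmid 0 0
    rw [add_zero, sub_zero, add_self, norm_zero] at h
    linarith [norm_nonneg (f 0)]
  obtain rfl | ht := (hs.trans hst).eq_or_lt
  · simp [hst.antisymm hs]
  have h := (convexOn_univ_norm_of_two_mul_norm_le hf hmid).2 (Set.mem_univ t) (Set.mem_univ 0)
    (div_nonneg hs ht.le) (sub_nonneg.2 ((div_le_one ht).2 hst)) (add_sub_cancel _ _)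
  simp only [smul_eq_mul, mul_zero, add_zero, norm_map_zero, div_mul_cancel₀ _ ht.ne',
    div_mul_eq_mul_div, le_div_iff₀' ht] at h
  exact h

theorem norm_le_mul_norm_sub_of_odd {f : ℝ → F} (hf : Continuous f) (hodd : Function.Odd f)
    (hmid : ∀ s t, 2 * ‖f s‖ ≤ ‖f (s + t) + f (s - t)‖) {s : ℝ} (hs : 1 / 2 ≤ s) :
    ‖f s‖ ≤ (s + 1) * ‖f s - f (s - 1)‖ := by
  have triangle : ‖f s‖ ≤ ‖f s - f (s - 1)‖ + ‖f (s - 1)‖ := norm_le_norm_sub_add _ _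
  obtain hs1 | hs1 := le_total 1 s
  · have shrink := mul_norm_le_mul_norm_of_odd hf hodd hmid (sub_nonneg.2 hs1)
      (sub_le_self s zero_le_one)
    nlinarith [norm_nonneg (f s - f (s - 1))]
  · have flip : f (s - 1) = -f (1 - s) := by rw [← hodd, neg_sub]
    have half : 2 * ‖f (1 / 2)‖ ≤ ‖f s - f (s - 1)‖ := by
      simpa [flip, add_sub_cancel, sub_sub_eq_add_sub, ← two_mul] using hmid (1 / 2) (s - 1 / 2)
    have shrink : 1 / 2 * ‖f (s - 1)‖ ≤ (1 - s) * ‖f (1 / 2)‖ := by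
      rw [flip, norm_neg]
      exact mul_norm_le_mul_norm_of_odd hf hodd hmid (by linarith) (by linarith)
    nlinarith [norm_nonneg (f s - f (s - 1))]

end MidpointConvexity

section CStarAlgebra

variable {𝒜 : Type*} [CStarAlgebra 𝒜]

theorem isUnit_of_algebraMap_le_add_star [PartialOrder 𝒜] [StarOrderedRing 𝒜] {a : 𝒜} {c : ℝ}
    (hc : 0 < c) (h : algebraMap ℝ 𝒜 c ≤ a + star a) : IsUnit a := by
  nontriviality 𝒜
  -- For large `R` the disc of radius `R` about `R` contains the spectrum of `a` but not `0`.
  obtain ⟨R, hR⟩ := exists_gt (max c (‖a‖ ^ 2 / c))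
  obtain ⟨hcR, hR⟩ := max_lt_iff.1 hR
  have hR0 : 0 < R := hc.trans hcR
  rw [div_lt_iff₀ hc] at hR
  have bound : star (algebraMap ℝ 𝒜 R - a) * (algebraMap ℝ 𝒜 R - a) ≤
      algebraMap ℝ 𝒜 (R ^ 2 - R * c + ‖a‖ ^ 2) := by
    have hsq : star a * a ≤ algebraMap ℝ 𝒜 (‖a‖ ^ 2) :=
      CStarAlgebra.star_mul_le_algebraMap_norm_sq
    have expand : star (algebraMap ℝ 𝒜 R - a) * (algebraMap ℝ 𝒜 R - a) =
        algebraMap ℝ 𝒜 (R ^ 2) - R • (a + star a) + star a * a := by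
      simp only [Algebra.algebraMap_eq_smul_one, star_sub, star_smul, star_one, star_trivial,
        sub_mul, mul_sub, smul_mul_assoc, mul_smul_comm, one_mul, mul_one]
      module
    rw [expand, map_add, map_sub, map_mul, ← Algebra.smul_def]
    gcongr
  have norm_lt : ‖algebraMap ℝ 𝒜 R - a‖ < ‖R‖ := by
    have hsq := CStarAlgebra.norm_le_norm_of_nonneg_of_le (star_mul_self_nonneg _) bound
    rw [CStarRing.norm_star_mul_self, norm_algebraMap', ← sq,
      Real.norm_of_nonneg (by nlinarith [sq_nonneg ‖a‖])] at hsq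
    exact lt_of_pow_lt_pow_left₀ 2 (norm_nonneg R) (by rw [Real.norm_eq_abs, sq_abs]; linarith)
  have := spectrum.mem_resolventSet_of_norm_lt norm_lt
  rwa [spectrum.mem_resolventSet_iff, sub_sub_cancel] at this

theorem le_of_mem_spectrum_of_add_star_le [PartialOrder 𝒜] [StarOrderedRing 𝒜] {a : 𝒜} {l r : ℝ}
    (hl : l ∈ spectrum ℝ a) (h : a + star a ≤ algebraMap ℝ 𝒜 (2 * r)) : l ≤ r := by
  by_contra! hlr
  refine spectrum.mem_iff.1 hl <|
    isUnit_of_algebraMap_le_add_star (c := 2 * (l - r)) (by linarith) ?_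
  rw [← sub_nonneg] at h ⊢
  refine h.trans_eq ?_
  simp only [Algebra.algebraMap_eq_smul_one, star_sub, star_smul, star_one, star_trivial]
  module

theorem le_norm_add_sq_of_mem_spectrum_mul_star {x y : 𝒜} {l : ℝ}
    (hl : l ∈ spectrum ℝ (x * star y)) : 4 * l ≤ ‖x + y‖ ^ 2 := by
  let : PartialOrder 𝒜 := CStarAlgebra.spectralOrder 𝒜
  have : StarOrderedRing 𝒜 := CStarAlgebra.spectralOrderedRing 𝒜
  have polarization : (2 : ℝ) • (x * star y + y * star x) =
      (x + y) * star (x + y) - (x - y) * star (x - y) := by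
    simp only [star_add, star_sub, two_smul]
    noncomm_ring
  have bound : (2 : ℝ) • (x * star y + y * star x) ≤ algebraMap ℝ 𝒜 (‖x + y‖ ^ 2) :=
    polarization ▸ (sub_le_self _ (mul_star_self_nonneg _)).trans
      CStarAlgebra.mul_star_le_algebraMap_norm_sq
  have := le_of_mem_spectrum_of_add_star_le (r := ‖x + y‖ ^ 2 / 4) hl <| by
    rw [star_mul, star_star, ← inv_smul_smul₀ (two_ne_zero (α := ℝ)) (_ + _)]
    refine (smul_le_smul_of_nonneg_left bound (by norm_num)).trans_eq ?_
    rw [← algebraMap.coe_smul, smul_eq_mul]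
    ring_nf
  linarith

theorem two_mul_norm_le_norm_conj_add_conj (u v : 𝒜ˣ) (y : 𝒜) :
    2 * ‖y‖ ≤ ‖u * y * ↑v⁻¹ + ↑(star u)⁻¹ * y * star (v : 𝒜)‖ := by
  let : PartialOrder 𝒜 := CStarAlgebra.spectralOrder 𝒜
  have : StarOrderedRing 𝒜 := CStarAlgebra.spectralOrderedRing 𝒜
  nontriviality 𝒜
  have conj : (u * y * ↑v⁻¹ : 𝒜) * star (↑(star u)⁻¹ * y * star (v : 𝒜)) =
      u * (y * star y) * ↑u⁻¹ := by
    simp [← Units.coe_star_inv, mul_assoc]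
  have hspec : ‖y‖ ^ 2 ∈
      spectrum ℝ ((u * y * ↑v⁻¹ : 𝒜) * star (↑(star u)⁻¹ * y * star (v : 𝒜))) := by
    rw [conj, spectrum.units_conjugate, sq, ← CStarRing.norm_self_mul_star]
    exact CStarAlgebra.norm_mem_spectrum_of_nonneg (mul_star_self_nonneg y)
  refine le_of_sq_le_sq ?_ (norm_nonneg _)
  linarith [le_norm_add_sq_of_mem_spectrum_mul_star hspec]

variable [PartialOrder 𝒜] [StarOrderedRing 𝒜]

theorem two_mul_norm_le_norm_rpow_conj_add {a b : 𝒜} (ha : IsStrictlyPositive a)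
    (hb : IsStrictlyPositive b) (y : 𝒜) (t : ℝ) :
    2 * ‖y‖ ≤ ‖a ^ t * y * b ^ (-t) + a ^ (-t) * y * b ^ t‖ := by
  let rpowUnit {c : 𝒜} (hc : IsStrictlyPositive c) : 𝒜ˣ :=
    ⟨c ^ t, c ^ (-t), CFC.rpow_mul_rpow_neg t hc, CFC.rpow_neg_mul_rpow t hc⟩
  have h := two_mul_norm_le_norm_conj_add_conj (rpowUnit ha) (rpowUnit hb) y
  have star_unit : star (rpowUnit ha) = rpowUnit ha :=
    Units.ext (IsSelfAdjoint.of_nonneg CFC.rpow_nonneg)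
  have star_rpow : star (b ^ t) = b ^ t := IsSelfAdjoint.of_nonneg CFC.rpow_nonneg
  rw [star_unit] at h
  simpa [rpowUnit, star_rpow] using h

theorem rpow_eq_exp_smul_log {a : 𝒜} (ha : IsStrictlyPositive a) (s : ℝ) :
    a ^ s = NormedSpace.exp (s • CFC.log a) := by
  conv_lhs => rw [← CFC.exp_log a, ← CFC.real_exp_eq_normedSpace_exp,
    CFC.cfc_rpow fun _ _ ↦ Real.exp_pos _]
  rw [← CFC.real_exp_eq_normedSpace_exp, ← cfc_comp_smul s Real.exp (CFC.log a)]
  simp only [← Real.exp_mul, smul_eq_mul, mul_comm]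

theorem continuous_const_rpow {a : 𝒜} (ha : IsStrictlyPositive a) :
    Continuous fun s : ℝ ↦ a ^ s := by
  let +nondep : NormedAlgebra ℚ 𝒜 := .restrictScalars ℚ ℝ 𝒜
  simp only [rpow_eq_exp_smul_log ha]
  exact NormedSpace.exp_continuous.comp (by fun_prop)

theorem continuousOn_rpow_const_of_nonneg {r : ℝ} (hr : 0 ≤ r) :
    ContinuousOn (fun a : 𝒜 ↦ a ^ r) (Set.Ici 0) :=
  continuousOn_id.cfc_nnreal_of_mem_nhdsSet _ Filter.univ_mem
    (hf := (NNReal.continuous_rpow_const hr).continuousOn)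

theorem closure_setOf_isStrictlyPositive :
    closure {a : 𝒜 | IsStrictlyPositive a} = Set.Ici 0 := by
  refine (closure_minimal (fun a ha ↦ ha.nonneg) isClosed_Ici).antisymm fun a ha ↦ ?_
  have tendsto : Filter.Tendsto (fun ε : ℝ ↦ a + algebraMap ℝ 𝒜 ε) (nhdsWithin 0 (Set.Ioi 0))
      (nhds a) :=
    tendsto_nhdsWithin_of_tendsto_nhds <|
      ((continuous_algebraMap ℝ 𝒜).const_add a).tendsto' 0 a (by simp)
  refine mem_closure_of_tendsto tendsto (eventually_mem_nhdsWithin.mono fun ε hε ↦ ?_)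
  exact IsStrictlyPositive.of_le (isStrictlyPositive_algebraMap hε) (le_add_of_nonneg_left ha)

theorem le_of_continuousOn_of_forall_isStrictlyPositive {β : Type*} [TopologicalSpace β]
    [Preorder β] [OrderClosedTopology β] {f g : 𝒜 × 𝒜 → β}
    (hf : ContinuousOn f (Set.Ici 0 ×ˢ Set.Ici 0)) (hg : ContinuousOn g (Set.Ici 0 ×ˢ Set.Ici 0))
    (hfg : ∀ a b, IsStrictlyPositive a → IsStrictlyPositive b → f (a, b) ≤ g (a, b))
    {a b : 𝒜} (ha : 0 ≤ a) (hb : 0 ≤ b) : f (a, b) ≤ g (a, b) := by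
  have closure_eq : closure ({a : 𝒜 | IsStrictlyPositive a} ×ˢ {b : 𝒜 | IsStrictlyPositive b}) =
      Set.Ici 0 ×ˢ Set.Ici 0 := by
    simp only [closure_prod_eq, closure_setOf_isStrictlyPositive]
  rw [← closure_eq] at hf hg
  exact le_on_closure (fun x hx ↦ hfg x.1 x.2 hx.1 hx.2) hf hg (closure_eq ▸ ⟨ha, hb⟩)

/-- The Heinz difference of `x` along `a` and `b`, meant for strictly positive `a` and `b`. With
`a = exp h` and `b = exp k` it is `2 sinh (s L) x`, where `L x = h * x - x * k`. -/
noncomputable def heinzDiff (a b x : 𝒜) (s : ℝ) : 𝒜 :=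
  a ^ s * x * b ^ (-s) - a ^ (-s) * x * b ^ s

theorem heinzDiff_odd (a b x : 𝒜) : Function.Odd (heinzDiff a b x) := fun s ↦ by
  simp only [heinzDiff, neg_neg, neg_sub]

theorem continuous_heinzDiff {a b : 𝒜} (ha : IsStrictlyPositive a) (hb : IsStrictlyPositive b)
    (x : 𝒜) : Continuous (heinzDiff a b x) := by
  have := continuous_const_rpow ha
  have := continuous_const_rpow hb
  unfold heinzDiff
  fun_prop

theorem rpow_conj_heinzDiff_add {a b : 𝒜} (ha : IsStrictlyPositive a)
    (hb : IsStrictlyPositive b) (x : 𝒜) (s t : ℝ) :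
    a ^ t * heinzDiff a b x s * b ^ (-t) + a ^ (-t) * heinzDiff a b x s * b ^ t =
      heinzDiff a b x (s + t) + heinzDiff a b x (s - t) := by
  have conj (p q u v : ℝ) :
      a ^ p * (a ^ q * x * b ^ u) * b ^ v = a ^ (p + q) * x * b ^ (u + v) := by
    simp only [CFC.rpow_add ha.isUnit, CFC.rpow_add hb.isUnit, mul_assoc]
  simp only [heinzDiff, mul_sub, sub_mul, conj]
  simp only [neg_add, sub_eq_add_neg, neg_neg, add_comm]
  abel

theorem two_mul_norm_heinzDiff_le {a b : 𝒜} (ha : IsStrictlyPositive a)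
    (hb : IsStrictlyPositive b) (x : 𝒜) (s t : ℝ) :
    2 * ‖heinzDiff a b x s‖ ≤ ‖heinzDiff a b x (s + t) + heinzDiff a b x (s - t)‖ :=
  rpow_conj_heinzDiff_add ha hb x s t ▸ two_mul_norm_le_norm_rpow_conj_add ha hb _ t

theorem heinzDiff_rpow_mul_rpow {a b : 𝒜} (ha : IsStrictlyPositive a)
    (hb : IsStrictlyPositive b) (r s : ℝ) :
    heinzDiff a b (a ^ r * b ^ r) s = a ^ (r + s) * b ^ (r - s) - a ^ (r - s) * b ^ (r + s) := by
  simp only [heinzDiff, ← mul_assoc, ← CFC.rpow_add ha.isUnit]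
  simp only [mul_assoc, ← CFC.rpow_add hb.isUnit, ← sub_eq_add_neg]
  rw [add_comm s, neg_add_eq_sub]

theorem norm_rpow_sub_rpow_le {a b : 𝒜} (ha : IsStrictlyPositive a)
    (hb : IsStrictlyPositive b) {p : ℝ} (hp : 1 ≤ p) :
    ‖a ^ p - b ^ p‖ ≤
      (p / 2 + 1) * ‖a ^ (p - 1) * (a - b) + (a - b) * b ^ (p - 1)‖ := by
  have rpow_eq_rpow_sub_one_mul : a ^ p = a ^ (p - 1) * a := by
    simpa [CFC.rpow_one a ha.nonneg] using CFC.rpow_add ha.isUnit (x := p - 1) (y := 1)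
  have rpow_eq_mul_rpow_sub_one : b ^ p = b * b ^ (p - 1) := by
    simpa [CFC.rpow_one b hb.nonneg] using CFC.rpow_add hb.isUnit (x := 1) (y := p - 1)
  have value : heinzDiff a b (a ^ (p / 2) * b ^ (p / 2)) (p / 2) = a ^ p - b ^ p := by
    rw [heinzDiff_rpow_mul_rpow ha hb, add_halves, sub_self, CFC.rpow_zero a ha.nonneg,
      CFC.rpow_zero b hb.nonneg, one_mul, mul_one]
  have prev_value : heinzDiff a b (a ^ (p / 2) * b ^ (p / 2)) (p / 2 - 1) =
      a ^ (p - 1) * b - a * b ^ (p - 1) := by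
    rw [heinzDiff_rpow_mul_rpow ha hb, add_sub, add_halves, sub_sub_cancel,
      CFC.rpow_one a ha.nonneg, CFC.rpow_one b hb.nonneg]
  have value_sub : a ^ p - b ^ p - (a ^ (p - 1) * b - a * b ^ (p - 1)) =
      a ^ (p - 1) * (a - b) + (a - b) * b ^ (p - 1) := by
    rw [rpow_eq_rpow_sub_one_mul, rpow_eq_mul_rpow_sub_one]
    noncomm_ring
  have step := norm_le_mul_norm_sub_of_odd (continuous_heinzDiff ha hb _)
    (heinzDiff_odd a b (a ^ (p / 2) * b ^ (p / 2))) (two_mul_norm_heinzDiff_le ha hb _)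
    (s := p / 2) (by linarith)
  rwa [value, prev_value, value_sub] at step

end CStarAlgebra

/-- **Nonlinearity estimate in a unital C*-algebra** (operator-norm case of the paper's
Theorem 4.1): for `p ≥ 1` there is a constant `c > 0` such that for all positive
elements `A, B`, `‖A^p − B^p‖ ≤ c ‖A^{p−1}(A − B) + (A − B)B^{p−1}‖`, where real powers
of positive elements are taken via the continuous functional calculus (`CFC.rpow`). -/
theorem nonlinearity_estimate_cstar
    {𝒜 : Type*} [CStarAlgebra 𝒜] [PartialOrder 𝒜] [StarOrderedRing 𝒜]
    (p : ℝ) (hp : 1 ≤ p) :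
    ∃ c : ℝ, 0 < c ∧ ∀ A B : 𝒜, 0 ≤ A → 0 ≤ B →
      ‖CFC.rpow A p - CFC.rpow B p‖ ≤
        c * ‖CFC.rpow A (p - 1) * (A - B) + (A - B) * CFC.rpow B (p - 1)‖ := by
  refine ⟨p / 2 + 1, by linarith, fun A B hA hB ↦ ?_⟩
  simp only [CFC.rpow_eq_pow]
  have fst_rpow {r : ℝ} (hr : 0 ≤ r) :
      ContinuousOn (fun x : 𝒜 × 𝒜 ↦ x.1 ^ r) (Set.Ici 0 ×ˢ Set.Ici 0) :=
    (continuousOn_rpow_const_of_nonneg hr).comp continuousOn_fst fun _ hx ↦ hx.1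
  have snd_rpow {r : ℝ} (hr : 0 ≤ r) :
      ContinuousOn (fun x : 𝒜 × 𝒜 ↦ x.2 ^ r) (Set.Ici 0 ×ˢ Set.Ici 0) :=
    (continuousOn_rpow_const_of_nonneg hr).comp continuousOn_snd fun _ hx ↦ hx.2
  have hp₀ : 0 ≤ p := zero_le_one.trans hp
  have hp₁ : 0 ≤ p - 1 := sub_nonneg.2 hp
  exact le_of_continuousOn_of_forall_isStrictlyPositive
    (f := fun x ↦ ‖x.1 ^ p - x.2 ^ p‖)
    (g := fun x ↦ (p / 2 + 1) * ‖x.1 ^ (p - 1) * (x.1 - x.2) + (x.1 - x.2) * x.2 ^ (p - 1)‖)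
    (by fun_prop (disch := assumption)) (by fun_prop (disch := assumption))
    (fun a b ha hb ↦ norm_rpow_sub_rpow_le ha hb hp) hA hB
end

section
/- Let p > 1 be a real number. There exists a Schwartz function g ∈ 𝓢(ℝ, ℝ) such that for every t ≠ 0, g(t) = sinh((p/2 − 1)·t) / ( cosh((p−1)·t/2) · sinh(t/2) ). (Equivalently: the function defined by this formula for t ≠ 0, extended by its limiting value p − 2 at t = 0, is a Schwartz function on ℝ.) -/
/-!
For `a = (p - 1) / 2` and `b = 1 / 2` the function is `sinh ((a - b) t) / (cosh (a t) sinh (b t))`.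
Its only singularity near the real axis, at `0`, is removable, so it extends holomorphically to a
horizontal strip. There it is `O(exp (-c |Re z|))` with `c = a + b - |a - b| > 0`, because `cosh w`
and `sinh w` both have modulus comparable to `exp |Re w|` for large `|Re w|`. On a smaller strip
Cauchy's estimate transfers the decay from a function to its derivative, hence to all of them.
-/

open Complex Set Metric
open scoped ContDiff SchwartzMap

section Strip

/-- The open horizontal strip of half-width `r` around the real axis. -/
def horizontalStrip (r : ℝ) : Set ℂ := {z | |z.im| < r}

theorem isOpen_horizontalStrip (r : ℝ) : IsOpen (horizontalStrip r) :=
  isOpen_lt (by fun_prop) continuous_const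

theorem ofReal_mem_horizontalStrip {r : ℝ} (hr : 0 < r) (t : ℝ) : (t : ℂ) ∈ horizontalStrip r := by
  simpa [horizontalStrip] using hr

theorem closedBall_subset_horizontalStrip {r s : ℝ} {z : ℂ} (hz : z ∈ horizontalStrip s) :
    closedBall z (r - s) ⊆ horizontalStrip r := by
  intro w hw
  have hdist : |w.im - z.im| ≤ r - s := by
    simpa using (abs_im_le_norm (w - z)).trans (mem_closedBall_iff_norm.1 hw)
  have hz' : |z.im| < s := hz
  have htri : |w.im| ≤ |w.im - z.im| + |z.im| := by simpa using abs_add_le (w.im - z.im) z.im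
  change |w.im| < r
  linarith

variable {E : Type*} [NormedAddCommGroup E] [NormedSpace ℂ E] {F : ℂ → E} {r s : ℝ}

/-- `F` is holomorphic on the strip of half-width `r` and decreases there, uniformly in the
imaginary part, faster than every power of the real part. The weight `1 + |Re z|` is used because
it is comparable at the points of a ball of fixed radius. -/
structure IsRapidlyDecreasingOnStrip (r : ℝ) (F : ℂ → E) : Prop where
  differentiableOn : DifferentiableOn ℂ F (horizontalStrip r)
  decay : ∀ k : ℕ, ∃ C : ℝ, ∀ z ∈ horizontalStrip r, (1 + |z.re|) ^ k * ‖F z‖ ≤ C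

theorem one_add_pow_mul_exp_neg_le {c x : ℝ} (hc : 0 < c) (hx : 0 ≤ x) (k : ℕ) :
    (1 + x) ^ k * Real.exp (-c * x) ≤ k.factorial / c ^ k * Real.exp c := by
  have hpow := Real.pow_div_factorial_le_exp (x := c * (1 + x)) (by positivity) k
  rw [div_le_iff₀ (by positivity), mul_pow] at hpow
  calc (1 + x) ^ k * Real.exp (-c * x)
      = c ^ k * (1 + x) ^ k / c ^ k * Real.exp (-c * x) := by field_simp
    _ ≤ Real.exp (c * (1 + x)) * k.factorial / c ^ k * Real.exp (-c * x) := by gcongr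
    _ = k.factorial / c ^ k * (Real.exp (c * (1 + x)) * Real.exp (-c * x)) := by ring
    _ = k.factorial / c ^ k * Real.exp c := by rw [← Real.exp_add]; ring_nf

theorem exists_norm_le_of_abs_re_le (hF : DifferentiableOn ℂ F (horizontalStrip r)) (hsr : s < r)
    (R : ℝ) : ∃ M : ℝ, ∀ z ∈ horizontalStrip s, |z.re| ≤ R → ‖F z‖ ≤ M := by
  have hsub : Icc (-R) R ×ℂ Icc (-s) s ⊆ horizontalStrip r := fun z hz ↦
    (abs_le.2 hz.2).trans_lt hsr
  obtain ⟨M, hM⟩ := (isCompact_Icc.reProdIm isCompact_Icc).exists_bound_of_continuousOn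
    (hF.continuousOn.mono hsub)
  exact ⟨M, fun z hz hzR ↦ hM z ⟨abs_le.1 hzR, abs_le.1 (le_of_lt hz)⟩⟩

namespace IsRapidlyDecreasingOnStrip

theorem of_exp_decay {A c R : ℝ} (hF : DifferentiableOn ℂ F (horizontalStrip r)) (hsr : s < r)
    (hc : 0 < c)
    (hexp : ∀ z ∈ horizontalStrip r, R ≤ |z.re| → ‖F z‖ ≤ A * Real.exp (-c * |z.re|)) :
    IsRapidlyDecreasingOnStrip s F where
  differentiableOn := hF.mono fun _ hz ↦ lt_trans hz hsr
  decay k := by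
    obtain ⟨M, hM⟩ := exists_norm_le_of_abs_re_le hF hsr R
    refine ⟨max ((1 + R) ^ k * M) (|A| * (k.factorial / c ^ k * Real.exp c)), fun z hz ↦ ?_⟩
    rcases le_total |z.re| R with hzR | hzR
    · have hR : 0 ≤ R := (abs_nonneg _).trans hzR
      refine le_max_of_le_left ?_
      gcongr
      exact hM z hz hzR
    · refine le_max_of_le_right ?_
      calc (1 + |z.re|) ^ k * ‖F z‖
          ≤ (1 + |z.re|) ^ k * (|A| * Real.exp (-c * |z.re|)) := by
            gcongr
            exact (hexp z (lt_trans hz hsr) hzR).trans (by gcongr; exact le_abs_self A)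
        _ = |A| * ((1 + |z.re|) ^ k * Real.exp (-c * |z.re|)) := by ring
        _ ≤ |A| * (k.factorial / c ^ k * Real.exp c) :=
            mul_le_mul_of_nonneg_left (one_add_pow_mul_exp_neg_le hc (abs_nonneg _) k)
              (abs_nonneg A)

protected theorem deriv [CompleteSpace E] (hF : IsRapidlyDecreasingOnStrip r F) (hsr : s < r) :
    IsRapidlyDecreasingOnStrip s (deriv F) where
  differentiableOn := (hF.differentiableOn.deriv (isOpen_horizontalStrip r)).mono
    fun _ hz ↦ lt_trans hz hsr
  decay k := by
    obtain ⟨C, hC⟩ := hF.decay k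
    have hρ : 0 < r - s := sub_pos.2 hsr
    refine ⟨(1 + (r - s)) ^ k * C / (r - s), fun z hz ↦ ?_⟩
    have hball := closedBall_subset_horizontalStrip (r := r) hz
    have hsphere : ∀ w ∈ sphere z (r - s),
        ‖F w‖ ≤ (1 + (r - s)) ^ k * C / (1 + |z.re|) ^ k := by
      intro w hw
      have hw' := sphere_subset_closedBall hw
      have hre : |z.re| ≤ |w.re| + (r - s) := by
        have hdist : |z.re - w.re| ≤ r - s := by
          simpa using (abs_re_le_norm (z - w)).trans (mem_closedBall_iff_norm'.1 hw')
        linarith [abs_sub_abs_le_abs_sub z.re w.re]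
      rw [le_div_iff₀ (by positivity)]
      calc ‖F w‖ * (1 + |z.re|) ^ k
          ≤ ‖F w‖ * ((1 + (r - s)) * (1 + |w.re|)) ^ k := by
            gcongr
            nlinarith [abs_nonneg w.re]
        _ = (1 + (r - s)) ^ k * ((1 + |w.re|) ^ k * ‖F w‖) := by rw [mul_pow]; ring
        _ ≤ (1 + (r - s)) ^ k * C := by
            gcongr
            exact hC w (hball hw')
    have hcauchy := norm_deriv_le_of_forall_mem_sphere_norm_le hρ
      (hF.differentiableOn.diffContOnCl_ball hball) hsphere
    rwa [div_right_comm, le_div_iff₀' (by positivity)] at hcauchy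

theorem hasDerivAt_comp_ofReal (hF : IsRapidlyDecreasingOnStrip r F) (hr : 0 < r) (t : ℝ) :
    HasDerivAt (fun t : ℝ ↦ F t) (deriv F t) t := by
  have hderiv : HasDerivAt F (deriv F t) (t : ℂ) :=
    (hF.differentiableOn.differentiableAt
      ((isOpen_horizontalStrip r).mem_nhds (ofReal_mem_horizontalStrip hr t))).hasDerivAt
  simpa [Function.comp_def] using hderiv.scomp t (ofRealCLM.hasDerivAt (x := t))

theorem contDiff_comp_ofReal [CompleteSpace E] (hF : IsRapidlyDecreasingOnStrip r F) (hr : 0 < r) :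
    ContDiff ℝ ∞ (fun t : ℝ ↦ F t) :=
  ((hF.differentiableOn.contDiffOn (isOpen_horizontalStrip r)).restrict_scalars ℝ).comp_contDiff
    ofRealCLM.contDiff (ofReal_mem_horizontalStrip hr)

theorem decay_iteratedDeriv [CompleteSpace E] (hF : IsRapidlyDecreasingOnStrip r F) (hr : 0 < r)
    (k n : ℕ) : ∃ C : ℝ, ∀ t : ℝ, |t| ^ k * ‖iteratedDeriv n (fun t : ℝ ↦ F t) t‖ ≤ C := by
  induction n generalizing r F with
  | zero =>
    obtain ⟨C, hC⟩ := hF.decay k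
    refine ⟨C, fun t ↦ le_trans ?_ (hC t (ofReal_mem_horizontalStrip hr t))⟩
    rw [iteratedDeriv_zero, ofReal_re]
    gcongr
    linarith
  | succ n ih =>
    have hderiv : deriv (fun t : ℝ ↦ F t) = fun t : ℝ ↦ deriv F t :=
      funext fun t ↦ (hF.hasDerivAt_comp_ofReal hr t).deriv
    simpa only [iteratedDeriv_succ', hderiv] using ih (hF.deriv (half_lt_self hr)) (half_pos hr)

/-- The restriction to the real axis, as a Schwartz function. -/
noncomputable def toSchwartzMap [CompleteSpace E] (hF : IsRapidlyDecreasingOnStrip r F)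
    (hr : 0 < r) : 𝓢(ℝ, E) where
  toFun t := F t
  smooth' := hF.contDiff_comp_ofReal hr
  decay' k n := by
    simpa only [norm_iteratedFDeriv_eq_norm_iteratedDeriv, Real.norm_eq_abs]
      using hF.decay_iteratedDeriv hr k n

end IsRapidlyDecreasingOnStrip

end Strip

section Hyperbolic

theorem norm_sinh_le_exp_abs_re (z : ℂ) : ‖sinh z‖ ≤ Real.exp |z.re| := by
  have htri := norm_sub_le (exp z) (exp (-z))
  rw [norm_exp, norm_exp, neg_re] at htri
  have hpos := Real.exp_le_exp.2 (le_abs_self z.re)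
  have hneg := Real.exp_le_exp.2 (neg_le_abs z.re)
  rw [sinh, norm_div, Complex.norm_two]
  linarith

theorem exp_abs_div_four_le_abs_sinh {x : ℝ} (hx : 1 ≤ |x|) :
    Real.exp |x| / 4 ≤ |Real.sinh x| := by
  have hinv : Real.exp |x| * Real.exp (-|x|) = 1 := by rw [← Real.exp_add]; simp
  have hexp := Real.add_one_le_exp |x|
  rw [Real.abs_sinh, Real.sinh_eq]
  nlinarith [Real.exp_pos (-|x|)]

theorem abs_sinh_re_le_norm_sinh (z : ℂ) : |Real.sinh z.re| ≤ ‖sinh z‖ := by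
  have htri := abs_norm_sub_norm_le (exp z) (exp (-z))
  rw [norm_exp, norm_exp, neg_re] at htri
  rw [Real.sinh_eq, sinh, abs_div, norm_div, Complex.norm_two, abs_two]
  gcongr

theorem abs_sinh_re_le_norm_cosh (z : ℂ) : |Real.sinh z.re| ≤ ‖cosh z‖ := by
  have htri := abs_norm_sub_norm_le (exp z) (-exp (-z))
  rw [norm_neg, sub_neg_eq_add, norm_exp, norm_exp, neg_re] at htri
  rw [Real.sinh_eq, cosh, abs_div, norm_div, Complex.norm_two, abs_two]
  gcongr

theorem cosh_ne_zero_of_abs_im_lt {z : ℂ} (hz : |z.im| < Real.pi / 2) : cosh z ≠ 0 := by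
  have hre : (cosh z).re = Real.cosh z.re * Real.cos z.im := by
    conv_lhs => rw [← re_add_im z, cosh_add, cosh_mul_I, sinh_mul_I]
    simp [← ofReal_cosh, ← ofReal_cos, ← ofReal_sinh, ← ofReal_sin]
  have hcos : 0 < Real.cos z.im := Real.cos_pos_of_mem_Ioo (abs_lt.1 hz)
  intro h
  rw [h, zero_re] at hre
  exact (mul_pos (Real.cosh_pos _) hcos).ne hre

theorem sinh_ne_zero_of_abs_im_lt {z : ℂ} (hz : z ≠ 0) (him : |z.im| < Real.pi) : sinh z ≠ 0 := by
  intro h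
  have hre : z.re = 0 := by
    simpa [h] using abs_sinh_re_le_norm_sinh z
  have hzI : z = z.im * I := by simpa [hre] using (re_add_im z).symm
  rw [hzI, sinh_mul_I] at h
  have hsin : Real.sin z.im = 0 := by simpa [← ofReal_sin] using h
  have hzero := (Real.sin_eq_zero_iff_of_lt_of_lt (abs_lt.1 him).1 (abs_lt.1 him).2).1 hsin
  exact hz (Complex.ext hre hzero)

/-- The entire function `sinh z / z`, with value `1` at `0`. -/
noncomputable def sinhc : ℂ → ℂ := dslope sinh 0

theorem mul_sinhc (z : ℂ) : z * sinhc z = sinh z := by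
  simpa [sinhc] using sub_smul_dslope sinh 0 z

@[fun_prop]
theorem differentiable_sinhc : Differentiable ℂ sinhc :=
  differentiableOn_univ.1 <|
    (differentiableOn_dslope Filter.univ_mem).2 differentiable_sinh.differentiableOn

theorem sinhc_ne_zero_of_abs_im_lt {z : ℂ} (him : |z.im| < Real.pi) : sinhc z ≠ 0 := by
  rcases eq_or_ne z 0 with rfl | hz
  · simp [sinhc, dslope_same, (hasDerivAt_sinh 0).deriv]
  · exact right_ne_zero_of_mul (mul_sinhc z ▸ sinh_ne_zero_of_abs_im_lt hz him)

end Hyperbolic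

section SinhQuotient

/-- The function `sinh ((a - b) z) / (cosh (a z) sinh (b z))` with its singularity at `0` removed:
a factor `z` has been cancelled from numerator and denominator. -/
noncomputable def sinhQuotient (a b : ℝ) (z : ℂ) : ℂ :=
  (a - b) * sinhc ((a - b) * z) / (cosh (a * z) * (b * sinhc (b * z)))

theorem sinhQuotient_of_ne_zero (a b : ℝ) {z : ℂ} (hz : z ≠ 0) :
    sinhQuotient a b z = sinh ((a - b) * z) / (cosh (a * z) * sinh (b * z)) := by
  rw [sinhQuotient, ← mul_sinhc ((a - b) * z), ← mul_sinhc (b * z), ← mul_div_mul_left _ _ hz]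
  ring_nf

variable {a b : ℝ}

theorem differentiableOn_sinhQuotient (ha : 0 < a) (hb : 0 < b) :
    DifferentiableOn ℂ (sinhQuotient a b) (horizontalStrip (1 / (a + b))) := by
  intro z hz
  have hzab : (a + b) * |z.im| < 1 := (lt_div_iff₀' (by positivity)).1 hz
  have hcosh : cosh (a * z) ≠ 0 := cosh_ne_zero_of_abs_im_lt <| by
    rw [im_ofReal_mul, abs_mul, abs_of_pos ha]
    nlinarith [Real.pi_gt_three, abs_nonneg z.im]
  have hsinhc : sinhc (b * z) ≠ 0 := sinhc_ne_zero_of_abs_im_lt <| by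
    rw [im_ofReal_mul, abs_mul, abs_of_pos hb]
    nlinarith [Real.pi_gt_three, abs_nonneg z.im]
  unfold sinhQuotient
  refine DifferentiableAt.differentiableWithinAt (.div (by fun_prop) (by fun_prop) ?_)
  exact mul_ne_zero hcosh (mul_ne_zero (ofReal_ne_zero.2 hb.ne') hsinhc)

theorem norm_sinhQuotient_le (ha : 0 < a) (hb : 0 < b) {z : ℂ} (hz : 1 / a + 1 / b ≤ |z.re|) :
    ‖sinhQuotient a b z‖ ≤ 16 * Real.exp (-(a + b - |a - b|) * |z.re|) := by
  have hre_pos : 0 < |z.re| := lt_of_lt_of_le (by positivity) hz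
  have hre (c : ℝ) (hc : 0 < c) : |(c * z).re| = c * |z.re| := by
    rw [re_ofReal_mul, abs_mul, abs_of_pos hc]
  have haz : 1 ≤ a * |z.re| := (div_le_iff₀' ha).1 (le_trans (by simp [hb.le]) hz)
  have hbz : 1 ≤ b * |z.re| := (div_le_iff₀' hb).1 (le_trans (by simp [ha.le]) hz)
  have hnum : ‖sinh ((a - b) * z)‖ ≤ Real.exp (|a - b| * |z.re|) := by
    simpa [abs_mul] using norm_sinh_le_exp_abs_re ((a - b) * z)
  have hcosh : Real.exp (a * |z.re|) / 4 ≤ ‖cosh (a * z)‖ := by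
    rw [← hre a ha] at haz ⊢
    exact (exp_abs_div_four_le_abs_sinh haz).trans (abs_sinh_re_le_norm_cosh _)
  have hsinh : Real.exp (b * |z.re|) / 4 ≤ ‖sinh (b * z)‖ := by
    rw [← hre b hb] at hbz ⊢
    exact (exp_abs_div_four_le_abs_sinh hbz).trans (abs_sinh_re_le_norm_sinh _)
  rw [sinhQuotient_of_ne_zero a b (by rintro rfl; simp at hre_pos), norm_div, norm_mul]
  calc ‖sinh ((a - b) * z)‖ / (‖cosh (a * z)‖ * ‖sinh (b * z)‖)
      ≤ Real.exp (|a - b| * |z.re|) /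
          (Real.exp (a * |z.re|) / 4 * (Real.exp (b * |z.re|) / 4)) := by gcongr
    _ = 16 * (Real.exp (|a - b| * |z.re|) /
          (Real.exp (a * |z.re|) * Real.exp (b * |z.re|))) := by field_simp; norm_num
    _ = 16 * Real.exp (-(a + b - |a - b|) * |z.re|) := by
        rw [← Real.exp_add, ← Real.exp_sub]
        ring_nf

theorem isRapidlyDecreasingOnStrip_sinhQuotient (ha : 0 < a) (hb : 0 < b) :
    IsRapidlyDecreasingOnStrip (1 / (a + b) / 2) (sinhQuotient a b) :=
  have hrate : 0 < a + b - |a - b| := sub_pos.2 (abs_sub_lt_iff.2 ⟨by linarith, by linarith⟩)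
  .of_exp_decay (differentiableOn_sinhQuotient ha hb) (half_lt_self (by positivity)) hrate
    fun _ _ hz ↦ norm_sinhQuotient_le ha hb hz

theorem exists_schwartzMap_eq_sinh_div_cosh_mul_sinh (ha : 0 < a) (hb : 0 < b) :
    ∃ g : 𝓢(ℝ, ℝ), ∀ t : ℝ, t ≠ 0 →
      g t = Real.sinh ((a - b) * t) / (Real.cosh (a * t) * Real.sinh (b * t)) := by
  let G := (isRapidlyDecreasingOnStrip_sinhQuotient ha hb).toSchwartzMap (by positivity)
  refine ⟨G.postcompCLM reCLM, fun t ht ↦ ?_⟩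
  have hG : G t = sinhQuotient a b t := rfl
  rw [SchwartzMap.postcompCLM_apply, hG, sinhQuotient_of_ne_zero a b (ofReal_ne_zero.2 ht),
    reCLM_apply]
  exact_mod_cast ofReal_re _

end SinhQuotient

/-- **Schwartz-class lemma** (paper's Lemma 4.4): for `p > 1`, the function
`t ↦ sinh((p/2 − 1)t) / (cosh((p−1)t/2) · sinh(t/2))` (defined for `t ≠ 0` and extended
by its limiting value at `0`) belongs to the Schwartz class `𝓢(ℝ, ℝ)`. -/
theorem schwartz_class_lemma (p : ℝ) (hp : 1 < p) :
    ∃ g : SchwartzMap ℝ ℝ, ∀ t : ℝ, t ≠ 0 →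
      g t = Real.sinh ((p / 2 - 1) * t) /
        (Real.cosh ((p - 1) * t / 2) * Real.sinh (t / 2)) := by
  obtain ⟨g, hg⟩ := exists_schwartzMap_eq_sinh_div_cosh_mul_sinh
    (a := (p - 1) / 2) (b := 1 / 2) (by linarith) (by norm_num)
  refine ⟨g, fun t ht ↦ ?_⟩
  rw [hg t ht]
  ring_nf
end

section
/- Let p > 1 be a real number and let λ, μ > 0 with λ ≠ μ. Then (λ^p − μ^p) / ( (λ − μ)·(λ^{p−1} + μ^{p−1}) ) = 1 + sinh((p/2 − 1)·L) / ( 2 · cosh((p−1)·L/2) · sinh(L/2) ), where L = log λ − log μ. -/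
/-!
Put `L = log x - log y`. Dividing `x ^ q` and `y ^ q` by `(x * y) ^ (q / 2)` leaves
`exp (± q * L / 2)`, so the difference and the sum of the `q`-th powers are `sinh (q * L / 2)` and
`cosh (q * L / 2)` times the same factor, which is multiplicative in `q`. These factors cancel in
the symbol, leaving `sinh (a + b) / (2 * cosh a * sinh b)` with `a = (p - 1) * L / 2` and
`b = L / 2`, and `sinh (a + b) - sinh (a - b) = 2 * cosh a * sinh b`.
-/

section

open Real

theorem sinh_add_div_two_mul_cosh_mul_sinh (a : ℝ) {b : ℝ} (hb : b ≠ 0) :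
    sinh (a + b) / (2 * cosh a * sinh b) = 1 + sinh (a - b) / (2 * cosh a * sinh b) := by
  have hden : 2 * cosh a * sinh b ≠ 0 :=
    mul_ne_zero (mul_ne_zero two_ne_zero (cosh_pos a).ne') (sinh_ne_zero.mpr hb)
  rw [← sub_eq_iff_eq_add, ← sub_div, div_eq_one_iff_eq hden, sinh_add, sinh_sub]
  ring

variable {x y : ℝ}

theorem rpow_eq_mul_rpow_half_mul_exp (hx : 0 < x) (hy : 0 < y) (q : ℝ) :
    x ^ q = (x * y) ^ (q / 2) * exp (q * (log x - log y) / 2) := by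
  rw [rpow_def_of_pos hx, rpow_def_of_pos (mul_pos hx hy), log_mul hx.ne' hy.ne', ← exp_add]
  ring_nf

theorem rpow_eq_mul_rpow_half_mul_exp_neg (hx : 0 < x) (hy : 0 < y) (q : ℝ) :
    y ^ q = (x * y) ^ (q / 2) * exp (-(q * (log x - log y) / 2)) := by
  rw [rpow_eq_mul_rpow_half_mul_exp hy hx, mul_comm y x]
  ring_nf

theorem rpow_sub_rpow_eq_mul_sinh (hx : 0 < x) (hy : 0 < y) (q : ℝ) :
    x ^ q - y ^ q = 2 * (x * y) ^ (q / 2) * sinh (q * (log x - log y) / 2) := by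
  rw [rpow_eq_mul_rpow_half_mul_exp hx hy, rpow_eq_mul_rpow_half_mul_exp_neg hx hy, sinh_eq]
  ring

theorem rpow_add_rpow_eq_mul_cosh (hx : 0 < x) (hy : 0 < y) (q : ℝ) :
    x ^ q + y ^ q = 2 * (x * y) ^ (q / 2) * cosh (q * (log x - log y) / 2) := by
  rw [rpow_eq_mul_rpow_half_mul_exp hx hy, rpow_eq_mul_rpow_half_mul_exp_neg hx hy, cosh_eq]
  ring

theorem rpow_sub_rpow_div_eq_sinh_div (hx : 0 < x) (hy : 0 < y) (q r : ℝ) :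
    (x ^ (q + r) - y ^ (q + r)) / ((x ^ r - y ^ r) * (x ^ q + y ^ q)) =
      sinh (q * (log x - log y) / 2 + r * (log x - log y) / 2) /
        (2 * cosh (q * (log x - log y) / 2) * sinh (r * (log x - log y) / 2)) := by
  have hxy : 0 < x * y := mul_pos hx hy
  set g := 2 * ((x * y) ^ (q / 2) * (x * y) ^ (r / 2)) with hg
  have hg_ne : g ≠ 0 := by positivity
  have hnum : x ^ (q + r) - y ^ (q + r) =
      g * sinh (q * (log x - log y) / 2 + r * (log x - log y) / 2) := by
    rw [rpow_sub_rpow_eq_mul_sinh hx hy, add_div, rpow_add hxy, ← add_div, ← add_mul]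
  have hden : (x ^ r - y ^ r) * (x ^ q + y ^ q) =
      g * (2 * cosh (q * (log x - log y) / 2) * sinh (r * (log x - log y) / 2)) := by
    rw [rpow_sub_rpow_eq_mul_sinh hx hy, rpow_add_rpow_eq_mul_cosh hx hy, hg]
    ring
  rw [hnum, hden, mul_div_mul_left _ _ hg_ne]

theorem doi_symbol_decomposition_general (p : ℝ) (hx : 0 < x) (hy : 0 < y) (hxy : x ≠ y) :
    (x ^ p - y ^ p) / ((x - y) * (x ^ (p - 1) + y ^ (p - 1))) =
      1 + sinh ((p / 2 - 1) * (log x - log y)) /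
        (2 * cosh ((p - 1) * (log x - log y) / 2) * sinh ((log x - log y) / 2)) := by
  have hL : (log x - log y) / 2 ≠ 0 :=
    div_ne_zero (sub_ne_zero.mpr (log_injOn_pos.ne hx hy hxy)) two_ne_zero
  have hsub : (p / 2 - 1) * (log x - log y) =
      (p - 1) * (log x - log y) / 2 - (log x - log y) / 2 := by ring
  have hquot := rpow_sub_rpow_div_eq_sinh_div hx hy (p - 1) 1
  rw [sub_add_cancel, rpow_one, rpow_one, one_mul] at hquot
  rw [hquot, hsub, sinh_add_div_two_mul_cosh_mul_sinh _ hL]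

end

/-- **Scalar decomposition of the divided-difference symbol** (from the proof of the paper's
Lemma 4.5): for `p > 1` and `λ, μ > 0` with `λ ≠ μ`, setting `L = log λ − log μ`, one has
`(λ^p − μ^p)/((λ − μ)(λ^{p−1} + μ^{p−1})) = 1 + sinh((p/2 − 1)L)/(2 cosh((p−1)L/2) sinh(L/2))`. -/
theorem doi_symbol_decomposition (p : ℝ) (hp : 1 < p) (lam mu : ℝ)
    (hlam : 0 < lam) (hmu : 0 < mu) (hne : lam ≠ mu) :
    (lam ^ p - mu ^ p) / ((lam - mu) * (lam ^ (p - 1) + mu ^ (p - 1))) =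
      1 + Real.sinh ((p / 2 - 1) * (Real.log lam - Real.log mu)) /
        (2 * Real.cosh ((p - 1) * (Real.log lam - Real.log mu) / 2) *
          Real.sinh ((Real.log lam - Real.log mu) / 2)) :=
  doi_symbol_decomposition_general p hlam hmu hne
end

section
/- Let H be a complex Hilbert space and let Φ : B(H) → B(H) be a continuous linear map satisfying Φ(1) = 1 and Φ(T*) = Φ(T)* for all T ∈ B(H). Assume Φ is 2-positive in the following sense: for all A, B, C ∈ B(H), if for all x, y ∈ H one has Re⟨x, A x⟩ + 2·Re⟨x, B y⟩ + Re⟨y, C y⟩ ≥ 0, then for all x, y ∈ H one has Re⟨x, Φ(A) x⟩ + 2·Re⟨x, Φ(B) y⟩ + Re⟨y, Φ(C) y⟩ ≥ 0. Then for every real p with 1 ≤ p ≤ 2 and every positive operator u ∈ B(H), one has Φ(u)^p ≤ Φ(u^p), i.e. Φ(u^p) − Φ(u)^p is a positive operator, where the real powers of positive operators are defined via the continuous functional calculus. -/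
open ContinuousLinearMap
open scoped InnerProductSpace

/-!
The Bernstein polynomials of `0 ≤ a ≤ 1` are positive and sum to `1`, so they act as an approximate
spectral resolution of `a`: with `Eₖ = Φ (bₙₖ(a)) ≥ 0`, letting `n → ∞` in
`0 ≤ ∑ₖ (k/n - T)* Eₖ (k/n - T)` gives `0 ≤ Φ(a²) - T* Φ(a) - Φ(a) T + T* Φ(1) T` for every `T`.
Taking `T = Φ(a)` with `Φ(1) = 1` is Kadison's inequality, the case `p = 2`. Taking instead the
positive map `x ↦ Φ(√a x √a)`, the element `a⁻¹` and `T = Φ(a)⁻¹` gives Choi's inequality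
`Φ(a)⁻¹ ≤ Φ(a⁻¹)`. For `1 < p < 2`, `x ^ p` is an integral over `t > 0` of positive multiples of
`(t + x)⁻¹` plus affine functions of `x`, and Choi's inequality applies under the integral.
-/

namespace OperatorJensen

open Polynomial MeasureTheory Real
open scoped Ring

section Bernstein

variable {K : Type*} [Field K] [CharZero K] {n : ℕ}

lemma sum_div_smul_bernsteinPolynomial (hn : n ≠ 0) :
    ∑ k ∈ Finset.range (n + 1), ((k : K) / n) • bernsteinPolynomial K n k = X := by
  have hn' : (n : K) ≠ 0 := Nat.cast_ne_zero.2 hn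
  have h := congr((n : K)⁻¹ • $(bernsteinPolynomial.sum_smul K n))
  simpa only [Finset.smul_sum, ← Nat.cast_smul_eq_nsmul K, smul_smul, inv_mul_cancel₀ hn',
    one_smul, inv_mul_eq_div] using h

lemma sum_div_sq_smul_bernsteinPolynomial (hn : n ≠ 0) :
    ∑ k ∈ Finset.range (n + 1), ((k : K) / n) ^ 2 • bernsteinPolynomial K n k =
      X ^ 2 + (n : K)⁻¹ • (X * (1 - X)) := by
  have hn' : (n : K) ≠ 0 := Nat.cast_ne_zero.2 hn
  have expand (k : ℕ) : (n • X - (k : K[X])) ^ 2 * bernsteinPolynomial K n k =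
      (n : K) ^ 2 • (((k : K) / n) ^ 2 • bernsteinPolynomial K n k
        - (2 * X) * ((k : K) / n) • bernsteinPolynomial K n k
        + X ^ 2 * bernsteinPolynomial K n k) := by
    have : (k : K[X]) = n * C ((k : K) / n) := by
      rw [← map_natCast C, ← map_natCast C, ← C_mul, mul_div_cancel₀ _ hn']
    rw [this]
    simp only [smul_eq_C_mul, map_pow, map_natCast, nsmul_eq_mul]
    ring
  have variance := bernsteinPolynomial.variance K n
  simp only [expand, ← Finset.smul_sum, Finset.sum_add_distrib, Finset.sum_sub_distrib,
    ← Finset.mul_sum, sum_div_smul_bernsteinPolynomial hn, bernsteinPolynomial.sum] at variance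
  have h := congr(((n : K) ^ 2)⁻¹ • $variance)
  rw [inv_smul_smul₀ (pow_ne_zero 2 hn')] at h
  have cancel : ((n : K) ^ 2)⁻¹ * n = (n : K)⁻¹ := by field_simp
  rw [← Nat.cast_smul_eq_nsmul K, smul_mul_assoc, smul_smul, cancel] at h
  linear_combination h

end Bernstein

variable {A B : Type*} [CStarAlgebra A] [PartialOrder A] [StarOrderedRing A]
  [CStarAlgebra B] [PartialOrder B] [StarOrderedRing B]

lemma aeval_bernsteinPolynomial_nonneg {a : A} (ha₀ : 0 ≤ a) (ha₁ : a ≤ 1) (n k : ℕ) :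
    0 ≤ aeval a (bernsteinPolynomial ℝ n k) := by
  rw [← cfc_polynomial _ a ha₀.isSelfAdjoint]
  refine cfc_nonneg fun x hx => ?_
  have hx₀ : 0 ≤ x := spectrum_nonneg_of_nonneg ha₀ hx
  have hx₁ : x ≤ 1 := (le_algebraMap_iff_spectrum_le (r := (1 : ℝ))).1 (by simpa using ha₁) x hx
  have : 0 ≤ 1 - x := sub_nonneg.2 hx₁
  simp only [bernsteinPolynomial, eval_mul, eval_pow, eval_sub, eval_one, eval_X, eval_natCast]
  positivity

lemma exists_affine_eq_of_isSelfAdjoint {a : A} (ha : IsSelfAdjoint a) :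
    ∃ (b : A) (r s : ℝ), 0 ≤ b ∧ b ≤ 1 ∧ r ≠ 0 ∧ a = r • b + s • 1 := by
  have hr : 0 < 2 * ‖a‖ + 1 := by positivity
  have lower : -(‖a‖ • 1) ≤ a := by
    simpa only [Algebra.algebraMap_eq_smul_one] using ha.neg_algebraMap_norm_le_self
  have upper : a ≤ ‖a‖ • 1 := by
    simpa only [Algebra.algebraMap_eq_smul_one] using ha.le_algebraMap_norm_self
  refine ⟨(2 * ‖a‖ + 1)⁻¹ • (a + ‖a‖ • 1), 2 * ‖a‖ + 1, -‖a‖, ?_, ?_, hr.ne', ?_⟩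
  · exact smul_nonneg (by positivity) (neg_le_iff_add_nonneg.1 lower)
  · rw [inv_smul_le_iff_of_pos hr]
    calc a + ‖a‖ • 1 ≤ ‖a‖ • 1 + ‖a‖ • 1 := by gcongr
      _ ≤ ‖a‖ • 1 + ‖a‖ • 1 + 1 := le_add_of_nonneg_right zero_le_one
      _ = (2 * ‖a‖ + 1) • 1 := by module
  · rw [smul_inv_smul₀ hr.ne']
    module

lemma sum_sq_smul_sub_sub_add_nonneg {R ι : Type*} [Ring R] [StarRing R] [PartialOrder R]
    [StarOrderedRing R] [Algebra ℝ R] [StarModule ℝ R] (s : Finset ι) (c : ι → ℝ) {E : ι → R}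
    (hE : ∀ i ∈ s, 0 ≤ E i) (T : R) :
    0 ≤ ∑ i ∈ s, c i ^ 2 • E i - star T * ∑ i ∈ s, c i • E i - (∑ i ∈ s, c i • E i) * T
      + star T * (∑ i ∈ s, E i) * T := by
  calc
    0 ≤ ∑ i ∈ s, star (c i • 1 - T) * E i * (c i • 1 - T) :=
      Finset.sum_nonneg fun i hi => star_left_conjugate_nonneg (hE i hi) _
    _ = _ := by
      simp only [Finset.mul_sum, Finset.sum_mul, ← Finset.sum_sub_distrib,
        ← Finset.sum_add_distrib]
      refine Finset.sum_congr rfl fun i _ => ?_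
      simp only [star_sub, star_smul, star_one, star_trivial, sub_mul, mul_sub, smul_mul_assoc,
        mul_smul_comm, one_mul, mul_one]
      module

lemma kadison_form_nonneg_of_mem_Icc (Φ : A →ₚ[ℂ] B) {a : A} (ha₀ : 0 ≤ a) (ha₁ : a ≤ 1)
    (T : B) :
    0 ≤ Φ (a ^ 2) - star T * Φ a - Φ a * T + star T * Φ 1 * T := by
  set Q := Φ (a ^ 2) - star T * Φ a - Φ a * T + star T * Φ 1 * T
  have bernstein_bound (n : ℕ) : 0 ≤ Q + ((n + 1 : ℕ) : ℝ)⁻¹ • Φ (a * (1 - a)) := by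
    let ψ := (Φ.toLinearMap.restrictScalars ℝ) ∘ₗ (aeval a : ℝ[X] →ₐ[ℝ] A).toLinearMap
    have key := sum_sq_smul_sub_sub_add_nonneg (Finset.range (n + 2))
      (fun k => (k : ℝ) / (n + 1 : ℕ)) (E := fun k => ψ (bernsteinPolynomial ℝ (n + 1) k))
      (fun k _ => Φ.map_nonneg (aeval_bernsteinPolynomial_nonneg ha₀ ha₁ _ k)) T
    simp only [← map_smul, ← map_sum, sum_div_smul_bernsteinPolynomial n.succ_ne_zero,
      sum_div_sq_smul_bernsteinPolynomial n.succ_ne_zero, bernsteinPolynomial.sum] at key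
    convert key using 1
    simp only [Nat.cast_add, Nat.cast_one, Nat.succ_eq_add_one, LinearMap.coe_comp,
      LinearMap.coe_restrictScalars, PositiveLinearMap.coe_toLinearMap, AlgHom.coe_toLinearMap,
      Function.comp_apply, map_add, map_pow, aeval_X, map_smul, map_mul, aeval_sub, map_one,
      Q, ψ]
    abel
  have limit : Filter.Tendsto (fun n : ℕ => Q + ((n + 1 : ℕ) : ℝ)⁻¹ • Φ (a * (1 - a)))
      Filter.atTop (nhds Q) := by
    have inv_tendsto : Filter.Tendsto (fun n : ℕ => ((n + 1 : ℕ) : ℝ)⁻¹) Filter.atTop (nhds 0) :=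
      tendsto_inv_atTop_nhds_zero_nat.comp (Filter.tendsto_add_atTop_nat 1)
    simpa only [zero_smul, add_zero] using
      (inv_tendsto.smul_const (Φ (a * (1 - a)))).const_add Q
  exact ge_of_tendsto' limit bernstein_bound

theorem kadison_form_nonneg (Φ : A →ₚ[ℂ] B) {a : A} (ha : IsSelfAdjoint a) (T : B) :
    0 ≤ Φ (a ^ 2) - star T * Φ a - Φ a * T + star T * Φ 1 * T := by
  obtain ⟨b, r, s, hb₀, hb₁, hr, rfl⟩ := exists_affine_eq_of_isSelfAdjoint ha
  obtain ⟨S, rfl⟩ : ∃ S : B, T = r • S + s • 1 :=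
    ⟨r⁻¹ • (T - s • 1), by rw [smul_inv_smul₀ hr, sub_add_cancel]⟩
  have hsq : (r • b + s • 1) ^ 2 = r ^ 2 • b ^ 2 + (2 * r * s) • b + s ^ 2 • (1 : A) := by
    simp only [pow_two, add_mul, mul_add, smul_mul_assoc, mul_smul_comm, one_mul, mul_one]
    module
  calc
    0 ≤ r ^ 2 • (Φ (b ^ 2) - star S * Φ b - Φ b * S + star S * Φ 1 * S) :=
      smul_nonneg (sq_nonneg r) (kadison_form_nonneg_of_mem_Icc Φ hb₀ hb₁ S)
    _ = _ := by
      rw [hsq]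
      simp only [map_add, Φ.map_smul_of_tower, star_add, star_smul, star_one, star_trivial,
        add_mul, mul_add, smul_mul_assoc, mul_smul_comm, one_mul, mul_one]
      module

theorem sq_map_le_map_sq {Φ : A →ₚ[ℂ] B} (hΦ : Φ 1 = 1) {a : A} (ha : IsSelfAdjoint a) :
    Φ a ^ 2 ≤ Φ (a ^ 2) := by
  have h := kadison_form_nonneg Φ ha (Φ a)
  have hΦa : IsSelfAdjoint (Φ a) := ha.map Φ
  rw [hΦa.star_eq, hΦ, mul_one, sub_add_cancel, ← pow_two] at h
  exact sub_nonneg.1 h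

/-- The positive, in general non-unital, map `x ↦ Φ (c* x c)`; the case `c = √a` turns Kadison's
inequality into Choi's. -/
noncomputable def compConj (Φ : A →ₚ[ℂ] B) (c : A) : A →ₚ[ℂ] B :=
  .mk₀ (Φ.toLinearMap ∘ₗ LinearMap.mulLeftRight ℂ (star c, c)) fun _ hx =>
    Φ.map_nonneg (star_left_conjugate_nonneg hx c)

lemma compConj_apply (Φ : A →ₚ[ℂ] B) (c x : A) : compConj Φ c x = Φ (star c * x * c) := rfl

lemma isStrictlyPositive_map {Φ : A →ₚ[ℂ] B} (hΦ : Φ 1 = 1) {a : A}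
    (ha : IsStrictlyPositive a) : IsStrictlyPositive (Φ a) := by
  nontriviality B
  have : Nontrivial A := ⟨0, 1, fun h => by simp [← h] at hΦ⟩
  obtain ⟨r, hr, hra⟩ :=
    (CFC.exists_pos_algebraMap_le_iff (a := a)).2 fun _ hx => ha.spectrum_pos hx
  have : Φ (algebraMap ℝ A r) ≤ Φ a := OrderHomClass.mono Φ hra
  rw [Algebra.algebraMap_eq_smul_one, Φ.map_smul_of_tower, hΦ] at this
  exact (IsStrictlyPositive.smul hr isStrictlyPositive_one).of_le this

theorem ringInverse_map_le_map_ringInverse {Φ : A →ₚ[ℂ] B} (hΦ : Φ 1 = 1) {a : A}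
    (ha : IsStrictlyPositive a) : (Φ a)⁻¹ʳ ≤ Φ a⁻¹ʳ := by
  have hΦa : IsStrictlyPositive (Φ a) := isStrictlyPositive_map hΦ ha
  have hT : star (Φ a)⁻¹ʳ = (Φ a)⁻¹ʳ := hΦa.ringInverse.isSelfAdjoint.star_eq
  have hs : star (CFC.sqrt a) = CFC.sqrt a := (CFC.sqrt_nonneg a).isSelfAdjoint.star_eq
  have hss : CFC.sqrt a * CFC.sqrt a = a := CFC.sqrt_mul_sqrt_self a
  have hcomm : Commute (CFC.sqrt a) a⁻¹ʳ := by
    have : Commute (CFC.sqrt a) a := by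
      simpa only [hss] using (Commute.refl (CFC.sqrt a)).mul_right (.refl _)
    obtain ⟨v, rfl⟩ := ha.isUnit
    simpa only [Ring.inverse_unit] using this.units_inv_right
  have conj_inv : CFC.sqrt a * a⁻¹ʳ * CFC.sqrt a = 1 := by
    rw [hcomm.eq, mul_assoc, hss, Ring.inverse_mul_cancel _ ha.isUnit]
  have conj_inv_sq : CFC.sqrt a * a⁻¹ʳ ^ 2 * CFC.sqrt a = a⁻¹ʳ := by
    rw [(hcomm.pow_right 2).eq, mul_assoc, hss, pow_two, mul_assoc,
      Ring.inverse_mul_cancel _ ha.isUnit, mul_one]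
  have h := kadison_form_nonneg (compConj Φ (CFC.sqrt a)) ha.ringInverse.isSelfAdjoint (Φ a)⁻¹ʳ
  simp only [compConj_apply, hs, conj_inv, conj_inv_sq, mul_one, hss, hΦ, hT, one_mul,
    Ring.inverse_mul_cancel _ hΦa.isUnit, sub_add_cancel] at h
  exact sub_nonneg.1 h

lemma continuousOn_rpowIntegrand₁₂ (p : ℝ) {t : ℝ} (ht : 0 < t) :
    ContinuousOn (rpowIntegrand₁₂ p t) (Set.Ici 0) := by
  have add_ne_zero : ∀ x ∈ Set.Ici (0 : ℝ), t + x ≠ 0 := fun x hx =>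
    (add_pos_of_pos_of_nonneg ht hx).ne'
  unfold rpowIntegrand₁₂
  fun_prop (disch := assumption)

lemma cfcₙ_rpowIntegrand₁₂ (p : ℝ) {t : ℝ} (ht : 0 < t) {a : A} (ha : 0 ≤ a) :
    cfcₙ (rpowIntegrand₁₂ p t) a =
      t ^ (p - 1) • (t⁻¹ • a + t • (algebraMap ℝ A t + a)⁻¹ʳ - 1) := by
  have add_ne_zero : ∀ x ∈ spectrum ℝ a, t + x ≠ 0 := fun x hx =>
    (add_pos_of_pos_of_nonneg ht (spectrum_nonneg_of_nonneg ha hx)).ne'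
  rw [cfcₙ_eq_cfc ((continuousOn_rpowIntegrand₁₂ p ht).mono
    (quasispectrum_nonneg_of_nonneg a ha)) (rpowIntegrand₁₂_zero ht)]
  unfold rpowIntegrand₁₂
  rw [cfc_const_mul _ _ a (by fun_prop (disch := assumption)),
    cfc_sub _ _ a (by fun_prop (disch := assumption)),
    cfc_add a _ _ (by fun_prop) (by fun_prop (disch := assumption)),
    cfc_const_mul_id .., cfc_const_mul _ _ a (by fun_prop (disch := assumption)),
    cfc_inv _ a add_ne_zero, cfc_const_add .., cfc_id' .., cfc_const_one ..]

lemma cfcₙ_rpowIntegrand₁₂_map_le {Φ : A →ₚ[ℂ] B} (hΦ : Φ 1 = 1) (p : ℝ) {t : ℝ} (ht : 0 < t)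
    {a : A} (ha : 0 ≤ a) :
    cfcₙ (rpowIntegrand₁₂ p t) (Φ a) ≤ Φ (cfcₙ (rpowIntegrand₁₂ p t) a) := by
  have hΦt : Φ (algebraMap ℝ A t + a) = algebraMap ℝ B t + Φ a := by
    simp only [Algebra.algebraMap_eq_smul_one, map_add, Φ.map_smul_of_tower, hΦ]
  have inverse_le : (algebraMap ℝ B t + Φ a)⁻¹ʳ ≤ Φ (algebraMap ℝ A t + a)⁻¹ʳ := by
    rw [← hΦt]
    exact ringInverse_map_le_map_ringInverse hΦ
      ((isStrictlyPositive_algebraMap ht).add_nonneg ha)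
  rw [cfcₙ_rpowIntegrand₁₂ p ht ha, cfcₙ_rpowIntegrand₁₂ p ht (Φ.map_nonneg ha)]
  simp only [Φ.map_smul_of_tower, map_sub, map_add, hΦ]
  gcongr

lemma cfcₙ_rpowIntegrand₁₂_prodMk (p : ℝ) {t : ℝ} (ht : 0 < t) {a : A} {b : B} (ha : 0 ≤ a)
    (hb : 0 ≤ b) :
    cfcₙ (rpowIntegrand₁₂ p t) (a, b) =
      (cfcₙ (rpowIntegrand₁₂ p t) a, cfcₙ (rpowIntegrand₁₂ p t) b) := by
  have spectra_nonneg : quasispectrum ℝ a ∪ quasispectrum ℝ b ⊆ Set.Ici 0 := Set.union_subset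
    (quasispectrum_nonneg_of_nonneg a ha) (quasispectrum_nonneg_of_nonneg b hb)
  exact cfcₙ_map_prod (S := ℝ) _ a b ((continuousOn_rpowIntegrand₁₂ p ht).mono spectra_nonneg)
    (IsSelfAdjoint.of_nonneg (Prod.mk_le_mk.2 ⟨ha, hb⟩)) ha.isSelfAdjoint hb.isSelfAdjoint

variable (A B) in
lemma exists_measure_forall_rpow_eq_integral {p : ℝ} (hp : p ∈ Set.Ioo 1 2) :
    ∃ μ : Measure ℝ,
      (∀ a : A, 0 ≤ a → IntegrableOn (fun t => cfcₙ (rpowIntegrand₁₂ p t) a) (Set.Ioi 0) μ ∧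
        a ^ p = ∫ t in Set.Ioi 0, cfcₙ (rpowIntegrand₁₂ p t) a ∂μ) ∧
      ∀ b : B, 0 ≤ b → IntegrableOn (fun t => cfcₙ (rpowIntegrand₁₂ p t) b) (Set.Ioi 0) μ ∧
        b ^ p = ∫ t in Set.Ioi 0, cfcₙ (rpowIntegrand₁₂ p t) b ∂μ := by
  lift p to NNReal using by linarith [hp.1]
  have hp' : p ∈ Set.Ioo 1 2 := by exact_mod_cast hp
  -- The library's measure depends on the algebra; one for `A × B` serves both factors.
  obtain ⟨μ, hμ⟩ := CFC.exists_measure_nnrpow_eq_integral_cfcₙ_rpowIntegrand₁₂ (A × B) hp'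
  have integral_prod {a : A} {b : B} (ha : 0 ≤ a) (hb : 0 ≤ b) :
      IntegrableOn (fun t => (cfcₙ (rpowIntegrand₁₂ p t) a, cfcₙ (rpowIntegrand₁₂ p t) b))
        (Set.Ioi 0) μ ∧ (a ^ (p : ℝ), b ^ (p : ℝ)) =
          ∫ t in Set.Ioi 0, (cfcₙ (rpowIntegrand₁₂ p t) a, cfcₙ (rpowIntegrand₁₂ p t) b) ∂μ := by
    obtain ⟨integrable, eq⟩ := hμ (a, b) ⟨ha, hb⟩
    have integrand_prod (t : ℝ) (ht : t ∈ Set.Ioi 0) :=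
      cfcₙ_rpowIntegrand₁₂_prodMk p ht ha hb
    have hp₀ : 0 < p := zero_lt_one.trans hp'.1
    rw [← CFC.nnrpow_eq_rpow hp₀, ← CFC.nnrpow_eq_rpow hp₀, ← CFC.nnrpow_map_prod,
      ← setIntegral_congr_fun measurableSet_Ioi integrand_prod, ← eq]
    exact ⟨integrable.congr_fun integrand_prod measurableSet_Ioi, rfl⟩
  refine ⟨μ, fun a ha => ?_, fun b hb => ?_⟩
  · obtain ⟨integrable, eq⟩ := integral_prod ha (le_refl (0 : B))
    exact ⟨integrable.fst, congr(Prod.fst $eq).trans (fst_integral integrable)⟩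
  · obtain ⟨integrable, eq⟩ := integral_prod (le_refl (0 : A)) hb
    exact ⟨integrable.snd, congr(Prod.snd $eq).trans (snd_integral integrable)⟩

theorem rpow_map_le_map_rpow_of_mem_Ioo {Φ : A →ₚ[ℂ] B} (hΦ : Φ 1 = 1) {p : ℝ}
    (hp : p ∈ Set.Ioo 1 2) {a : A} (ha : 0 ≤ a) : Φ a ^ p ≤ Φ (a ^ p) := by
  obtain ⟨μ, hA, hB⟩ := exists_measure_forall_rpow_eq_integral A B hp
  obtain ⟨integrable_a, rpow_a⟩ := hA a ha
  obtain ⟨integrable_map, rpow_map⟩ := hB (Φ a) (Φ.map_nonneg ha)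
  let L : A →L[ℂ] B := ⟨Φ.toLinearMap, map_continuous Φ⟩
  calc
    Φ a ^ p = ∫ t in Set.Ioi 0, cfcₙ (rpowIntegrand₁₂ p t) (Φ a) ∂μ := rpow_map
    _ ≤ ∫ t in Set.Ioi 0, L (cfcₙ (rpowIntegrand₁₂ p t) a) ∂μ :=
      setIntegral_mono_on integrable_map (L.integrable_comp integrable_a) measurableSet_Ioi
        fun t ht => cfcₙ_rpowIntegrand₁₂_map_le hΦ p ht ha
    _ = Φ (a ^ p) := by
      rw [L.integral_comp_comm integrable_a, ← rpow_a]
      rfl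

variable {H K : Type*} [NormedAddCommGroup H] [InnerProductSpace ℂ H] [CompleteSpace H]
  [NormedAddCommGroup K] [InnerProductSpace ℂ K] [CompleteSpace K]

lemma isPositive_map_of_re_inner_nonneg {Φ : (H →L[ℂ] H) → (K →L[ℂ] K)}
    (hstar : ∀ T, Φ (adjoint T) = adjoint (Φ T))
    (hpos : ∀ T, (∀ x, 0 ≤ (⟪x, T x⟫_ℂ).re) → ∀ x, 0 ≤ (⟪x, Φ T x⟫_ℂ).re)
    {T : H →L[ℂ] H} (hT : T.IsPositive) : (Φ T).IsPositive := by
  refine isPositive_def'.2 ⟨?_, fun x => ?_⟩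
  · rw [isSelfAdjoint_iff', ← hstar, hT.isSelfAdjoint.adjoint_eq]
  · rw [reApplyInnerSelf_apply, inner_re_symm]
    exact hpos T hT.re_inner_nonneg_right x

/-- A star-preserving linear map between operator algebras that preserves nonnegativity of the
quadratic form `Re ⟪x, T x⟫`, bundled as a positive map for the Loewner order. -/
noncomputable def positiveLinearMapOfReInnerNonneg (Φ : (H →L[ℂ] H) →ₗ[ℂ] (K →L[ℂ] K))
    (hstar : ∀ T, Φ (adjoint T) = adjoint (Φ T))
    (hpos : ∀ T, (∀ x, 0 ≤ (⟪x, T x⟫_ℂ).re) → ∀ x, 0 ≤ (⟪x, Φ T x⟫_ℂ).re) :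
    (H →L[ℂ] H) →ₚ[ℂ] (K →L[ℂ] K) :=
  .mk₀ Φ fun T hT => (nonneg_iff_isPositive _).2 <|
    isPositive_map_of_re_inner_nonneg hstar hpos ((nonneg_iff_isPositive T).1 hT)

end OperatorJensen

theorem operator_jensen_ucp_general {A B : Type*} [CStarAlgebra A] [PartialOrder A]
    [StarOrderedRing A] [CStarAlgebra B] [PartialOrder B] [StarOrderedRing B] {Φ : A →ₚ[ℂ] B}
    (hΦ : Φ 1 = 1) {p : ℝ} (hp1 : 1 ≤ p) (hp2 : p ≤ 2) {u : A} (hu : 0 ≤ u) :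
    Φ u ^ p ≤ Φ (u ^ p) := by
  have hΦu : 0 ≤ Φ u := Φ.map_nonneg hu
  rcases hp1.eq_or_lt with rfl | one_lt
  · rw [CFC.rpow_one u hu, CFC.rpow_one (Φ u) hΦu]
  rcases hp2.eq_or_lt with rfl | lt_two
  · rw [← Nat.cast_ofNat, CFC.rpow_natCast u 2 hu, CFC.rpow_natCast (Φ u) 2 hΦu]
    exact OperatorJensen.sq_map_le_map_sq hΦ hu.isSelfAdjoint
  · exact OperatorJensen.rpow_map_le_map_rpow_of_mem_Ioo hΦ ⟨one_lt, lt_two⟩ hu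

/-- **Operator Jensen inequality** (the paper's Proposition A.2): if `Φ : B(H) → B(H)` is a
continuous linear, unital, star-preserving and 2-positive map, then for every `1 ≤ p ≤ 2`
and every positive `u ∈ B(H)` one has `Φ(u)^p ≤ Φ(u^p)`, the real powers being taken via the
continuous functional calculus. -/
theorem operator_jensen_ucp {H : Type*} [NormedAddCommGroup H]
    [InnerProductSpace ℂ H] [CompleteSpace H]
    (Φ : (H →L[ℂ] H) →L[ℂ] (H →L[ℂ] H))
    (hunital : Φ 1 = 1)
    (hstar : ∀ T : H →L[ℂ] H, Φ (adjoint T) = adjoint (Φ T))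
    (h2pos : ∀ A B C : H →L[ℂ] H,
      (∀ x y : H,
        0 ≤ (⟪x, A x⟫_ℂ).re + 2 * (⟪x, B y⟫_ℂ).re + (⟪y, C y⟫_ℂ).re) →
      ∀ x y : H,
        0 ≤ (⟪x, Φ A x⟫_ℂ).re + 2 * (⟪x, Φ B y⟫_ℂ).re + (⟪y, Φ C y⟫_ℂ).re)
    (p : ℝ) (hp1 : 1 ≤ p) (hp2 : p ≤ 2)
    (u : H →L[ℂ] H) (hu : u.IsPositive) :
    (Φ (cfc (fun x : ℝ => x ^ p) u) - cfc (fun x : ℝ => x ^ p) (Φ u)).IsPositive := by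
  let Ψ := OperatorJensen.positiveLinearMapOfReInnerNonneg Φ.toLinearMap hstar
    fun T hT x => by simpa using h2pos T 0 0 (fun x _ => by simpa using hT x) x 0
  have hu₀ : 0 ≤ u := (nonneg_iff_isPositive u).2 hu
  have hΦu : 0 ≤ Φ u := Ψ.map_nonneg hu₀
  rw [← le_def, ← CFC.rpow_eq_cfc_real hu₀, ← CFC.rpow_eq_cfc_real hΦu]
  exact operator_jensen_ucp_general (Φ := Ψ) hunital hp1 hp2 hu₀
end

section
/- Let p > 1 and s₁ > 0 be real numbers, and let ρ : ℝ → ℝ be differentiable on [0, s₁] with ρ(t) > 0 for all t ∈ [0, s₁] and ρ'(t) ≥ ρ(t)^p for all t ∈ [0, s₁]. Then ρ(0)^{1−p} ≥ (p − 1)·s₁; equivalently, ρ(0) ≤ ((p − 1)·s₁)^{−1/(p−1)}. -/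
/-!
While `ρ > 0`, the inequality `ρ' ≥ ρ^p` says that `ρ^(1-p)` decreases at rate at least `p - 1`.
Being positive at the right endpoint of the interval, it must therefore start at no less than
`p - 1` times the length of the interval. Positivity propagates from the left endpoint: wherever
`ρ` takes its initial value, its derivative is positive, so `ρ` never falls below that value.
-/

section DifferentialInequality

open Set

variable {a b p : ℝ} {ρ ρ' : ℝ → ℝ}

theorem const_le_of_deriv_right_pos_of_eq {c : ℝ} (hcont : ContinuousOn ρ (Icc a b))
    (hderiv : ∀ t ∈ Ico a b, HasDerivWithinAt ρ (ρ' t) (Ici t) t) (ha : c ≤ ρ a)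
    (hlevel : ∀ t ∈ Ico a b, ρ t = c → 0 < ρ' t) :
    ∀ t ∈ Icc a b, c ≤ ρ t :=
  image_le_of_deriv_right_lt_deriv_boundary' (f := fun _ => c) continuousOn_const
    (fun t _ => hasDerivWithinAt_const t (Ici t) c) ha hcont hderiv
    (fun t ht hct => hlevel t ht hct.symm)

theorem le_of_rpow_le_deriv_right (hcont : ContinuousOn ρ (Icc a b))
    (hderiv : ∀ t ∈ Ico a b, HasDerivWithinAt ρ (ρ' t) (Ici t) t) (ha : 0 < ρ a)
    (hineq : ∀ t ∈ Ico a b, ρ t ^ p ≤ ρ' t) :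
    ∀ t ∈ Icc a b, ρ a ≤ ρ t := by
  refine const_le_of_deriv_right_pos_of_eq hcont hderiv le_rfl fun t ht heq => ?_
  have hpos : 0 < ρ t := heq ▸ ha
  exact (Real.rpow_pos_of_pos hpos p).trans_le (hineq t ht)

theorem one_le_mul_rpow_neg {x y : ℝ} (hx : 0 < x) (hxy : x ^ p ≤ y) : 1 ≤ y * x ^ (-p) := by
  rwa [Real.rpow_neg hx.le, ← div_eq_mul_inv, one_le_div (Real.rpow_pos_of_pos hx p)]

theorem rpow_one_sub_le_of_rpow_le_deriv_right (hp : 1 ≤ p) (hcont : ContinuousOn ρ (Icc a b))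
    (hderiv : ∀ t ∈ Ico a b, HasDerivWithinAt ρ (ρ' t) (Ici t) t) (ha : 0 < ρ a)
    (hineq : ∀ t ∈ Ico a b, ρ t ^ p ≤ ρ' t) :
    ∀ t ∈ Icc a b, ρ t ^ (1 - p) ≤ ρ a ^ (1 - p) - (p - 1) * (t - a) := by
  have hpos (t : ℝ) (ht : t ∈ Icc a b) : 0 < ρ t :=
    ha.trans_le (le_of_rpow_le_deriv_right hcont hderiv ha hineq t ht)
  have hpow_cont : ContinuousOn (fun t => ρ t ^ (1 - p)) (Icc a b) :=
    hcont.rpow_const fun t ht => Or.inl (hpos t ht).ne'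
  have hpow_deriv (t : ℝ) (ht : t ∈ Ico a b) :
      HasDerivWithinAt (fun t => ρ t ^ (1 - p)) (ρ' t * (1 - p) * ρ t ^ (1 - p - 1)) (Ici t) t :=
    (hderiv t ht).rpow_const (Or.inl (hpos t (Ico_subset_Icc_self ht)).ne')
  have hline_deriv (t : ℝ) :
      HasDerivAt (fun t => ρ a ^ (1 - p) - (p - 1) * (t - a)) (-(p - 1)) t := by
    simpa using (((hasDerivAt_id t).sub_const a).const_mul (p - 1)).const_sub (ρ a ^ (1 - p))
  refine image_le_of_deriv_right_le_deriv_boundary hpow_cont hpow_deriv (by simp)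
    (fun t _ => (hline_deriv t).continuousAt.continuousWithinAt)
    (fun t _ => (hline_deriv t).hasDerivWithinAt) fun t ht => ?_
  have hone : 1 ≤ ρ' t * ρ t ^ (-p) :=
    one_le_mul_rpow_neg (hpos t (Ico_subset_Icc_self ht)) (hineq t ht)
  calc ρ' t * (1 - p) * ρ t ^ (1 - p - 1)
      = -(p - 1) * (ρ' t * ρ t ^ (-p)) := by ring_nf
    _ ≤ -(p - 1) * 1 := mul_le_mul_of_nonpos_left hone (by linarith)
    _ = -(p - 1) := mul_one _

theorem scalar_blowup_bound_general (hp : 1 < p) (hab : a < b) (hcont : ContinuousOn ρ (Icc a b))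
    (hderiv : ∀ t ∈ Ico a b, HasDerivWithinAt ρ (ρ' t) (Ici t) t) (ha : 0 < ρ a)
    (hineq : ∀ t ∈ Ico a b, ρ t ^ p ≤ ρ' t) :
    (p - 1) * (b - a) ≤ ρ a ^ (1 - p) ∧ ρ a ≤ ((p - 1) * (b - a)) ^ (-(1 / (p - 1))) := by
  have hb : b ∈ Icc a b := right_mem_Icc.2 hab.le
  have hρb : 0 < ρ b := ha.trans_le (le_of_rpow_le_deriv_right hcont hderiv ha hineq b hb)
  have hlower : (p - 1) * (b - a) ≤ ρ a ^ (1 - p) := by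
    linarith [Real.rpow_pos_of_pos hρb (1 - p),
      rpow_one_sub_le_of_rpow_le_deriv_right hp.le hcont hderiv ha hineq b hb]
  have hexp : -(1 / (p - 1)) = (1 - p)⁻¹ := by rw [one_div, ← inv_neg, neg_sub]
  have hlen : 0 < (p - 1) * (b - a) := mul_pos (sub_pos.2 hp) (sub_pos.2 hab)
  refine ⟨hlower, ?_⟩
  rwa [hexp, Real.le_rpow_inv_iff_of_neg ha hlen (sub_neg.2 hp)]

end DifferentialInequality

/-- **Scalar differential inequality** (core of the proof of the paper's Lemma 6.1): if
`ρ > 0` is differentiable on `[0, s₁]` with `ρ' ≥ ρ^p` there, then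
`ρ(0)^{1−p} ≥ (p−1) s₁`, equivalently `ρ(0) ≤ ((p−1) s₁)^{−1/(p−1)}`. -/
theorem scalar_blowup_bound (p s₁ : ℝ) (hp : 1 < p) (hs₁ : 0 < s₁)
    (ρ ρ' : ℝ → ℝ)
    (hderiv : ∀ t ∈ Set.Icc (0 : ℝ) s₁, HasDerivAt ρ (ρ' t) t)
    (hpos : ∀ t ∈ Set.Icc (0 : ℝ) s₁, 0 < ρ t)
    (hineq : ∀ t ∈ Set.Icc (0 : ℝ) s₁, ρ t ^ p ≤ ρ' t) :
    (p - 1) * s₁ ≤ ρ 0 ^ (1 - p) ∧ ρ 0 ≤ ((p - 1) * s₁) ^ (-(1 / (p - 1))) := by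
  simpa only [sub_zero] using scalar_blowup_bound_general hp hs₁ (HasDerivAt.continuousOn hderiv)
    (fun t ht => (hderiv t (Set.Ico_subset_Icc_self ht)).hasDerivWithinAt)
    (hpos 0 (Set.left_mem_Icc.2 hs₁.le)) fun t ht => hineq t (Set.Ico_subset_Icc_self ht)
end

section
/- Let d ≥ 1 be a natural number and let u : ℝ^d → ℝ be a measurable, essentially bounded function with u ≥ 0 almost everywhere. Then u is integrable if and only if sup_{t>0} (4πt)^{d/2} · ‖G_t * u‖_{L^∞(ℝ^d)} < ∞; moreover, if this supremum is finite then ∫_{ℝ^d} u ≤ sup_{t>0} (4πt)^{d/2} · ‖G_t * u‖_{L^∞(ℝ^d)}. -/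
open MeasureTheory ENNReal

/-- The Gaussian heat kernel `G_t(η) = (4πt)^{−d/2} exp(−|η|²/(4t))` on `ℝ^d`. -/
noncomputable def heatKernel (d : ℕ) (t : ℝ) (η : EuclideanSpace ℝ (Fin d)) : ℝ :=
  (4 * Real.pi * t) ^ (-(d : ℝ) / 2) * Real.exp (-‖η‖ ^ 2 / (4 * t))

/-
The prefactor `(4πt)^{d/2}` cancels the normalisation of the heat kernel, so the supremum only
involves integrals of `u` against `exp(-|x - y|²/(4t))`. These weights are at most `1`, which bounds
the supremum by `∫ u`; as `t → ∞` they tend to `1`, so Fatou's lemma at a single generic point `x`,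
along a sequence of times, gives the reverse inequality. The supremum is thus equal to `∫ u`.
-/

open Filter Module Topology

section Kernel

variable {α β : Type*} [MeasurableSpace α] [MeasurableSpace β] {μ : Measure α} {ν : Measure β}
  {f : β → ℝ≥0∞}

theorem lintegral_le_of_eventually_essSup_lintegral_mul_le [NeZero μ] {ι : Type*} {l : Filter ι}
    [l.NeBot] [l.IsCountablyGenerated] {k : ι → α → β → ℝ≥0∞}
    (hk : ∀ i x, AEMeasurable (k i x) ν) (hf : AEMeasurable f ν)
    (hk_lim : ∀ x y, Tendsto (fun i ↦ k i x y) l (𝓝 1)) {C : ℝ≥0∞}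
    (hC : ∀ᶠ i in l, essSup (fun x ↦ ∫⁻ y, k i x y * f y ∂ν) μ ≤ C) :
    ∫⁻ y, f y ∂ν ≤ C := by
  -- Fatou needs one point `x` that works for all indices, hence the passage to a sequence.
  obtain ⟨τ, hτ⟩ := l.exists_seq_tendsto
  obtain ⟨x, hx⟩ : ∃ x, ∀ n, ∫⁻ y, k (τ n) x y * f y ∂ν
      ≤ essSup (fun x ↦ ∫⁻ y, k (τ n) x y * f y ∂ν) μ :=
    (ae_all_iff.2 fun n ↦ ENNReal.ae_le_essSup _).exists
  have h_lim (y : β) : Tendsto (fun n ↦ k (τ n) x y * f y) atTop (𝓝 (f y)) := by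
    simpa using ENNReal.Tendsto.mul_const ((hk_lim x y).comp hτ) (Or.inl one_ne_zero)
  calc ∫⁻ y, f y ∂ν
      = ∫⁻ y, liminf (fun n ↦ k (τ n) x y * f y) atTop ∂ν := by simp_rw [(h_lim _).liminf_eq]
    _ ≤ liminf (fun n ↦ ∫⁻ y, k (τ n) x y * f y ∂ν) atTop :=
        lintegral_liminf_le' fun n ↦ (hk (τ n) x).mul hf
    _ ≤ C := liminf_le_of_frequently_le'
        ((hτ.eventually hC).mono fun n hn ↦ (hx n).trans hn).frequently

theorem essSup_lintegral_mul_le_lintegral {k : α → β → ℝ≥0∞} (hk : ∀ x y, k x y ≤ 1) :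
    essSup (fun x ↦ ∫⁻ y, k x y * f y ∂ν) μ ≤ ∫⁻ y, f y ∂ν :=
  essSup_le_of_ae_le _ <| .of_forall fun x ↦ lintegral_mono fun y ↦ mul_le_of_le_one_left' (hk x y)

end Kernel

theorem enorm_integral_eq_lintegral_enorm_of_nonneg {α : Type*} [MeasurableSpace α] {μ : Measure α}
    {f : α → ℝ} (hf : Integrable f μ) (hf_nonneg : 0 ≤ᵐ[μ] f) :
    ‖∫ x, f x ∂μ‖ₑ = ∫⁻ x, ‖f x‖ₑ ∂μ := by
  rw [Real.enorm_of_nonneg (integral_nonneg_of_ae hf_nonneg),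
    ← ofReal_integral_norm_eq_lintegral_enorm hf]
  congr 1
  exact integral_congr_ae (hf_nonneg.mono fun x hx ↦ (Real.norm_of_nonneg hx).symm)

section GaussianWeight

variable {α : Type*} [PseudoMetricSpace α]

/-- The heat kernel `exp(-d(x, y)² / (4t))` without its normalising factor `(4πt)^{-d/2}`; in this
form it makes sense on any pseudometric space. -/
noncomputable def gaussianWeight (t : ℝ) (x y : α) : ℝ :=
  Real.exp (-dist x y ^ 2 / (4 * t))

theorem gaussianWeight_nonneg (t : ℝ) (x y : α) : 0 ≤ gaussianWeight t x y :=
  Real.exp_nonneg _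

theorem enorm_gaussianWeight_le_one {t : ℝ} (ht : 0 ≤ t) (x y : α) :
    ‖gaussianWeight t x y‖ₑ ≤ 1 := by
  rw [Real.enorm_of_nonneg (gaussianWeight_nonneg t x y), ENNReal.ofReal_le_one, gaussianWeight,
    Real.exp_le_one_iff, neg_div]
  exact neg_nonpos.2 (by positivity)

theorem tendsto_gaussianWeight_atTop (x y : α) :
    Tendsto (fun t ↦ gaussianWeight t x y) atTop (𝓝 1) := by
  have h : Tendsto (fun t : ℝ ↦ -dist x y ^ 2 / (4 * t)) atTop (𝓝 0) :=
    (tendsto_id.const_mul_atTop four_pos).const_div_atTop _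
  simpa [gaussianWeight] using h.rexp

theorem gaussianWeight_rpow (t q : ℝ) (x y : α) :
    gaussianWeight t x y ^ q = gaussianWeight (t / q) x y := by
  rw [gaussianWeight, gaussianWeight, ← Real.exp_mul]
  congr 1
  rw [div_mul_eq_mul_div, mul_div_assoc', div_div_eq_mul_div]

theorem continuous_gaussianWeight (t : ℝ) (x : α) : Continuous (gaussianWeight t x) := by
  unfold gaussianWeight
  fun_prop

variable [MeasurableSpace α] [OpensMeasurableSpace α] {μ : Measure α}

theorem iSup_essSup_lintegral_gaussianWeight_mul {f : α → ℝ≥0∞} (hf : AEMeasurable f μ) :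
    ⨆ t ∈ Set.Ioi (0 : ℝ), essSup (fun x ↦ ∫⁻ y, ‖gaussianWeight t x y‖ₑ * f y ∂μ) μ
      = ∫⁻ y, f y ∂μ := by
  obtain rfl | _ := eq_zero_or_neZero μ
  · simp
  refine le_antisymm (iSup₂_le fun t ht ↦
    essSup_lintegral_mul_le_lintegral (enorm_gaussianWeight_le_one (le_of_lt ht))) ?_
  refine lintegral_le_of_eventually_essSup_lintegral_mul_le (μ := μ) (l := (atTop : Filter ℝ))
    (fun t x ↦ (continuous_gaussianWeight t x).measurable.enorm.aemeasurable) hf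
    (fun x y ↦ by simpa using (tendsto_gaussianWeight_atTop x y).enorm) ?_
  filter_upwards [eventually_gt_atTop 0] with t ht
  exact le_iSup₂_of_le t ht le_rfl

theorem iSup_eLpNorm_integral_gaussianWeight_mul {u : α → ℝ} (hu : AEStronglyMeasurable u μ)
    (hu_nonneg : 0 ≤ᵐ[μ] u)
    (hu_int : ∀ t > 0, ∀ᵐ x ∂μ, Integrable (fun y ↦ gaussianWeight t x y * u y) μ) :
    ⨆ t ∈ Set.Ioi (0 : ℝ), eLpNorm (fun x ↦ ∫ y, gaussianWeight t x y * u y ∂μ) ⊤ μ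
      = ∫⁻ y, ‖u y‖ₑ ∂μ := by
  rw [← iSup_essSup_lintegral_gaussianWeight_mul hu.enorm]
  refine biSup_congr fun t ht ↦ ?_
  rw [eLpNorm_exponent_top, eLpNormEssSup]
  refine essSup_congr_ae ((hu_int t ht).mono fun x hx ↦ ?_)
  have h_nonneg : 0 ≤ᵐ[μ] fun y ↦ gaussianWeight t x y * u y :=
    hu_nonneg.mono fun y hy ↦ mul_nonneg (gaussianWeight_nonneg t x y) hy
  simp only [enorm_integral_eq_lintegral_enorm_of_nonneg hx h_nonneg, enorm_mul]

end GaussianWeight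

section HeatFlow

variable {V : Type*} [NormedAddCommGroup V] [InnerProductSpace ℝ V] [FiniteDimensional ℝ V]
  [MeasurableSpace V] [BorelSpace V]

theorem integrable_exp_neg_mul_sq_norm {b : ℝ} (hb : 0 < b) :
    Integrable fun v : V ↦ Real.exp (-b * ‖v‖ ^ 2) := by
  simpa [Complex.norm_exp, ← Complex.ofReal_pow] using
    (GaussianFourier.integrable_cexp_neg_mul_sq_norm_add (V := V) (b := b) (by simpa) 0 0).norm

theorem integrable_gaussianWeight {t : ℝ} (ht : 0 < t) (x : V) :
    Integrable (gaussianWeight t x) := by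
  have hb : 0 < (4 * t)⁻¹ := by positivity
  refine ((integrable_exp_neg_mul_sq_norm hb).comp_sub_left x).congr (.of_forall fun y ↦ ?_)
  simp only [gaussianWeight, dist_eq_norm, neg_mul, mul_neg, div_eq_inv_mul]

theorem memLp_gaussianWeight {t : ℝ} (ht : 0 < t) (x : V) (q : ℝ≥0∞) :
    MemLp (gaussianWeight t x) q := by
  have h_meas : AEStronglyMeasurable (gaussianWeight t x) :=
    (continuous_gaussianWeight t x).aestronglyMeasurable
  obtain rfl | rfl | hq := q.trichotomy
  · exact memLp_zero_iff_aestronglyMeasurable.2 h_meas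
  · exact memLp_top_of_bound_enorm h_meas 1
      (.of_forall fun y ↦ enorm_gaussianWeight_le_one ht.le x y)
  · obtain ⟨hq_pos, hq_top⟩ := ENNReal.toReal_pos_iff.1 hq
    rw [← integrable_norm_rpow_iff h_meas hq_pos.ne' hq_top.ne]
    simpa only [Real.norm_of_nonneg (gaussianWeight_nonneg t x _), gaussianWeight_rpow]
      using integrable_gaussianWeight (div_pos ht hq) x

/-- The heat flow `G_t * u` on a finite-dimensional real inner product space `V`, with `dim V`
in place of `d` in the normalising factor. -/
noncomputable def heatFlow (t : ℝ) (u : V → ℝ) (x : V) : ℝ :=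
  ∫ y, (4 * Real.pi * t) ^ (-(finrank ℝ V : ℝ) / 2) * gaussianWeight t x y * u y

theorem heatFlow_euclideanSpace {d : ℕ} (t : ℝ) (u : EuclideanSpace ℝ (Fin d) → ℝ) :
    heatFlow t u = fun x ↦ ∫ y, heatKernel d t (x - y) * u y := by
  ext x
  simp only [heatFlow, gaussianWeight, heatKernel, dist_eq_norm, finrank_euclideanSpace_fin]

theorem ofReal_rpow_mul_eLpNorm_heatFlow {t : ℝ} (ht : 0 < t) (u : V → ℝ) (q : ℝ≥0∞) :
    ENNReal.ofReal ((4 * Real.pi * t) ^ ((finrank ℝ V : ℝ) / 2)) * eLpNorm (heatFlow t u) q volume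
      = eLpNorm (fun x ↦ ∫ y, gaussianWeight t x y * u y) q volume := by
  have hc : 0 < (4 * Real.pi * t) ^ ((finrank ℝ V : ℝ) / 2) := by positivity
  rw [← Real.enorm_of_nonneg hc.le, ← eLpNorm_const_smul]
  congr 1
  ext x
  simp only [Pi.smul_apply, smul_eq_mul, heatFlow, mul_assoc _ (gaussianWeight t x _),
    integral_const_mul, neg_div]
  rw [Real.rpow_neg (by positivity), mul_inv_cancel_left₀ hc.ne']

theorem iSup_eLpNorm_heatFlow_eq_lintegral {p : ℝ≥0∞} (hp : 1 ≤ p) {u : V → ℝ} (hu : MemLp u p)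
    (hu_nonneg : 0 ≤ᵐ[volume] u) :
    ⨆ t ∈ Set.Ioi (0 : ℝ), ENNReal.ofReal ((4 * Real.pi * t) ^ ((finrank ℝ V : ℝ) / 2)) *
      eLpNorm (heatFlow t u) ⊤ volume = ∫⁻ x, ‖u x‖ₑ := by
  have : p.HolderConjugate p.conjExponent := .conjExponent hp
  rw [← iSup_eLpNorm_integral_gaussianWeight_mul hu.1 hu_nonneg fun t ht ↦ .of_forall fun x ↦
    (memLp_gaussianWeight ht x p.conjExponent).integrable_mul hu]
  exact biSup_congr fun t ht ↦ ofReal_rpow_mul_eLpNorm_heatFlow ht u ⊤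

theorem tauberian_L1_heat_flow_general {p : ℝ≥0∞} (hp : 1 ≤ p) {u : V → ℝ} (hu : MemLp u p)
    (hu_nonneg : 0 ≤ᵐ[volume] u) :
    (Integrable u ↔
      (⨆ t ∈ Set.Ioi (0 : ℝ), ENNReal.ofReal ((4 * Real.pi * t) ^ ((finrank ℝ V : ℝ) / 2)) *
        eLpNorm (heatFlow t u) ⊤ volume) < ⊤) ∧
    ((⨆ t ∈ Set.Ioi (0 : ℝ), ENNReal.ofReal ((4 * Real.pi * t) ^ ((finrank ℝ V : ℝ) / 2)) *
        eLpNorm (heatFlow t u) ⊤ volume) < ⊤ →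
      ENNReal.ofReal (∫ x, u x) =
        ⨆ t ∈ Set.Ioi (0 : ℝ), ENNReal.ofReal ((4 * Real.pi * t) ^ ((finrank ℝ V : ℝ) / 2)) *
          eLpNorm (heatFlow t u) ⊤ volume) := by
  rw [iSup_eLpNorm_heatFlow_eq_lintegral hp hu hu_nonneg]
  have h_int : Integrable u ↔ ∫⁻ x, ‖u x‖ₑ < ⊤ := ⟨fun h ↦ h.2, fun h ↦ ⟨hu.1, h⟩⟩
  refine ⟨h_int, fun h ↦ ?_⟩
  rw [← enorm_integral_eq_lintegral_enorm_of_nonneg (h_int.2 h) hu_nonneg,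
    Real.enorm_of_nonneg (integral_nonneg_of_ae hu_nonneg)]

end HeatFlow

/-- **Tauberian characterization of `L¹` via the heat flow** (commutative case of the paper's
Theorem 3.7): a nonnegative essentially bounded measurable `u` is integrable iff
`sup_{t>0} (4πt)^{d/2} ‖G_t * u‖_∞ < ∞`, in which case `∫ u` is bounded by this supremum. -/
theorem tauberian_L1_heat_flow (d : ℕ) (hd : 1 ≤ d)
    (u : EuclideanSpace ℝ (Fin d) → ℝ) (hmeas : Measurable u)
    (hbdd : eLpNorm u ⊤ volume < ⊤) (hpos : 0 ≤ᵐ[volume] u) :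
    (Integrable u ↔
      (⨆ t ∈ Set.Ioi (0 : ℝ), ENNReal.ofReal ((4 * Real.pi * t) ^ ((d : ℝ) / 2)) *
        eLpNorm (fun x => ∫ y, heatKernel d t (x - y) * u y) ⊤ volume) < ⊤) ∧
    ((⨆ t ∈ Set.Ioi (0 : ℝ), ENNReal.ofReal ((4 * Real.pi * t) ^ ((d : ℝ) / 2)) *
        eLpNorm (fun x => ∫ y, heatKernel d t (x - y) * u y) ⊤ volume) < ⊤ →
      ENNReal.ofReal (∫ x, u x) ≤
        ⨆ t ∈ Set.Ioi (0 : ℝ), ENNReal.ofReal ((4 * Real.pi * t) ^ ((d : ℝ) / 2)) *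
          eLpNorm (fun x => ∫ y, heatKernel d t (x - y) * u y) ⊤ volume) := by
  have h := tauberian_L1_heat_flow_general le_top ⟨hmeas.aestronglyMeasurable, hbdd⟩ hpos
  simp only [heatFlow_euclideanSpace, finrank_euclideanSpace_fin] at h
  exact ⟨h.1, fun hS ↦ (h.2 hS).le⟩
end

section
/- Let d ≥ 1 be a natural number, p > 1 and s > 0 real numbers. Then for every ζ ∈ ℝ^d, ∫_{ℝ^d} G_s(ξ) · G_2(ζ − ξ) dξ ≥ (s + 1)^{−(d/2)(1 − 1/p)} · G_{(s+1)^{1/p} + 1}(ζ); equivalently, G_{s+2}(ζ) ≥ (s + 1)^{−(d/2)(1 − 1/p)} · G_{(s+1)^{1/p} + 1}(ζ). -/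
open MeasureTheory

/-!
The product `G_s(ξ) G_t(ζ - ξ)` factors, after completing the square in `ξ`, as `G_{s+t}(ζ)` times
a heat kernel in `ξ` centred at `(s / (s + t)) ζ`, which has mass one; hence `G_s * G_t = G_{s+t}`.

The Gaussian exponential increases with time, so whenever `r ≤ t ≤ c r` one has
`c^{-d/2} G_r ≤ G_t`: only the normalising prefactors have to be compared. For `r = a^θ + b`,
`t = a + b` and `c = a^{1-θ}` with `a ≥ 1` and `θ ≤ 1`, the condition `t ≤ c r` is
`a + b ≤ a + c b`.
-/

lemma norm_sq_div_add_norm_sub_sq_div {E : Type*} [NormedAddCommGroup E] [InnerProductSpace ℝ E]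
    {s t : ℝ} (hs : s ≠ 0) (ht : t ≠ 0) (hst : s + t ≠ 0) (x y : E) :
    ‖x‖ ^ 2 / s + ‖y - x‖ ^ 2 / t =
      ‖y‖ ^ 2 / (s + t) + ‖x - (s / (s + t)) • y‖ ^ 2 / (s * t / (s + t)) := by
  rw [norm_sub_sq_real, norm_sub_sq_real, inner_smul_right, norm_smul, mul_pow,
    Real.norm_eq_abs, sq_abs, real_inner_comm y x]
  field_simp
  ring

section HeatKernel

variable {d : ℕ} {s t : ℝ}

lemma heatKernel_mul_heatKernel_sub (hs : 0 < s) (ht : 0 < t) (ξ ζ : EuclideanSpace ℝ (Fin d)) :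
    heatKernel d s ξ * heatKernel d t (ζ - ξ) =
      heatKernel d (s + t) ζ * heatKernel d (s * t / (s + t)) (ξ - (s / (s + t)) • ζ) := by
  have exponents : -‖ξ‖ ^ 2 / (4 * s) + -‖ζ - ξ‖ ^ 2 / (4 * t) =
      -‖ζ‖ ^ 2 / (4 * (s + t)) +
        -‖ξ - (s / (s + t)) • ζ‖ ^ 2 / (4 * (s * t / (s + t))) := by
    have square := norm_sq_div_add_norm_sub_sq_div hs.ne' ht.ne' (add_pos hs ht).ne' ξ ζ
    simp only [neg_div, mul_comm (4 : ℝ), ← div_div]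
    linear_combination (-1 / 4) * square
  have prefactors : 4 * Real.pi * s * (4 * Real.pi * t) =
      4 * Real.pi * (s + t) * (4 * Real.pi * (s * t / (s + t))) := by
    field_simp
  simp only [heatKernel]
  rw [mul_mul_mul_comm, ← Real.exp_add, exponents, Real.exp_add,
    ← Real.mul_rpow (by positivity) (by positivity), prefactors,
    Real.mul_rpow (by positivity) (by positivity), mul_mul_mul_comm]

lemma integral_heatKernel (ht : 0 < t) : ∫ ξ, heatKernel d t ξ = 1 := by
  have gaussian : ∫ ξ : EuclideanSpace ℝ (Fin d), Real.exp (-‖ξ‖ ^ 2 / (4 * t)) =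
      (4 * Real.pi * t) ^ ((d : ℝ) / 2) := by
    convert GaussianFourier.integral_rexp_neg_mul_sq_norm (V := EuclideanSpace ℝ (Fin d))
      (inv_pos.2 (mul_pos four_pos ht)) using 2
    · ext ξ
      ring_nf
    · rw [div_inv_eq_mul]
      ring
    · rw [finrank_euclideanSpace_fin]
  simp only [heatKernel]
  rw [integral_const_mul, gaussian, ← Real.rpow_add (by positivity), neg_div, neg_add_cancel,
    Real.rpow_zero]

theorem integral_heatKernel_mul_heatKernel_sub (hs : 0 < s) (ht : 0 < t)
    (ζ : EuclideanSpace ℝ (Fin d)) :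
    ∫ ξ, heatKernel d s ξ * heatKernel d t (ζ - ξ) = heatKernel d (s + t) ζ := by
  simp only [heatKernel_mul_heatKernel_sub hs ht]
  rw [integral_const_mul, integral_sub_right_eq_self, integral_heatKernel (by positivity), mul_one]

lemma rpow_mul_heatKernel_le {r c : ℝ} (hr : 0 < r) (hrt : r ≤ t) (htc : t ≤ c * r)
    (η : EuclideanSpace ℝ (Fin d)) :
    c ^ (-(d : ℝ) / 2) * heatKernel d r η ≤ heatKernel d t η := by
  have ht : 0 < t := hr.trans_le hrt
  have hc : 0 < c := pos_of_mul_pos_left (ht.trans_le htc) hr.le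
  have prefactor_le : c ^ (-(d : ℝ) / 2) * (4 * Real.pi * r) ^ (-(d : ℝ) / 2) ≤
      (4 * Real.pi * t) ^ (-(d : ℝ) / 2) := by
    rw [← Real.mul_rpow hc.le (by positivity), mul_left_comm]
    have exponent_nonpos : -(d : ℝ) / 2 ≤ 0 := by
      rw [neg_div]
      exact neg_nonpos.2 (by positivity)
    exact Real.rpow_le_rpow_of_nonpos (by positivity) (by gcongr) exponent_nonpos
  have exp_le : Real.exp (-‖η‖ ^ 2 / (4 * r)) ≤ Real.exp (-‖η‖ ^ 2 / (4 * t)) := by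
    simp only [neg_div]
    gcongr
  simp only [heatKernel]
  rw [← mul_assoc]
  gcongr

lemma rpow_mul_heatKernel_rpow_add_le {a b θ : ℝ} (ha : 1 ≤ a) (hb : 0 ≤ b) (hθ : θ ≤ 1)
    (η : EuclideanSpace ℝ (Fin d)) :
    a ^ (-(d : ℝ) / 2 * (1 - θ)) * heatKernel d (a ^ θ + b) η ≤ heatKernel d (a + b) η := by
  have ha₀ : 0 < a := zero_lt_one.trans_le ha
  have rpow_le : a ^ θ ≤ a := Real.rpow_le_self_of_one_le ha hθ
  have one_le : 1 ≤ a ^ (1 - θ) := Real.one_le_rpow ha (sub_nonneg.2 hθ)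
  have time_le : a + b ≤ a ^ (1 - θ) * (a ^ θ + b) :=
    calc a + b ≤ a + a ^ (1 - θ) * b := by gcongr; exact le_mul_of_one_le_left hb one_le
      _ = a ^ (1 - θ) * (a ^ θ + b) := by
        rw [mul_add, ← Real.rpow_add ha₀, sub_add_cancel, Real.rpow_one]
  rw [mul_comm (-(d : ℝ) / 2), Real.rpow_mul ha₀.le]
  exact rpow_mul_heatKernel_le (by positivity) (by gcongr) time_le η

theorem gaussian_comparison_general {a b θ : ℝ} (hs : 0 < s) (ht : 0 < t) (ha : 1 ≤ a)
    (hb : 0 ≤ b) (hst : s + t = a + b) (hθ : θ ≤ 1) (ζ : EuclideanSpace ℝ (Fin d)) :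
    (a ^ (-(d : ℝ) / 2 * (1 - θ)) * heatKernel d (a ^ θ + b) ζ ≤
        ∫ ξ, heatKernel d s ξ * heatKernel d t (ζ - ξ)) ∧
      a ^ (-(d : ℝ) / 2 * (1 - θ)) * heatKernel d (a ^ θ + b) ζ ≤ heatKernel d (s + t) ζ := by
  rw [integral_heatKernel_mul_heatKernel_sub hs ht, and_self, hst]
  exact rpow_mul_heatKernel_rpow_add_le ha hb hθ ζ

end HeatKernel

/-- **Gaussian comparison inequality** (formula (7.9) in the proof of the paper's Theorem 7.4):
for `p > 1` and `s > 0`,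
`(G_s * G_2)(ζ) ≥ (s+1)^{−(d/2)(1−1/p)} G_{(s+1)^{1/p}+1}(ζ)` for every `ζ ∈ ℝ^d`. -/
theorem gaussian_comparison (d : ℕ) (hd : 1 ≤ d) (p s : ℝ) (hp : 1 < p) (hs : 0 < s)
    (ζ : EuclideanSpace ℝ (Fin d)) :
    ((s + 1) ^ (-(d : ℝ) / 2 * (1 - 1 / p)) * heatKernel d ((s + 1) ^ (1 / p) + 1) ζ ≤
        ∫ ξ, heatKernel d s ξ * heatKernel d 2 (ζ - ξ)) ∧
      (s + 1) ^ (-(d : ℝ) / 2 * (1 - 1 / p)) * heatKernel d ((s + 1) ^ (1 / p) + 1) ζ ≤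
        heatKernel d (s + 2) ζ :=
  gaussian_comparison_general hs two_pos (by linarith) zero_le_one (by ring)
    ((div_le_one (zero_lt_one.trans hp)).2 hp.le) ζ
end

section
/- Let a, c be real numbers with a > c ≥ 0 and let f : ℝ → ℂ be integrable. Then the double integral ∫_ℝ ∫_ℝ exp(−a(x² + y²) + 2c·x·y) · conj(f(y)) · f(x) dx dy is real and nonnegative; in particular its real part is ≥ 0. -/
open MeasureTheory Complex

/-! By Bochner's easy direction, a kernel `k(x, y) = charFun ν (x - y)` is positive semidefinite:
Fubini's theorem turns its quadratic form at `g` into `∫ |∫ exp(i⟪s, x⟫) g(x) dx|² dν(s)`.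
Completing the square,
`-a(‖x‖² + ‖y‖²) + 2c⟪x, y⟫ = -(a - c)‖x‖² - (a - c)‖y‖² - c‖x - y‖²`,
so the Mehler-type form at `f` is the form of `exp(-c‖x - y‖²)` at `g(x) = exp(-(a - c)‖x‖²) f(x)`,
and `exp(-c‖·‖²)` is the characteristic function of a centred Gaussian because `c ≥ 0`. -/

section GaussianKernel

open ProbabilityTheory
open scoped InnerProductSpace ComplexConjugate ComplexOrder

lemma integrable_exp_neg_mul_norm_sq_mul {E : Type*} [NormedAddCommGroup E] [MeasurableSpace E]
    [OpensMeasurableSpace E] {μ : Measure E} {f : E → ℂ} (hf : Integrable f μ) {b : ℂ}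
    (hb : 0 ≤ b.re) : Integrable (fun x ↦ cexp (-b * ‖x‖ ^ 2) * f x) μ := by
  refine hf.bdd_mul (c := 1) ?_ (ae_of_all _ fun x ↦ ?_)
  · exact (by fun_prop : Measurable fun x : E ↦ cexp (-b * ‖x‖ ^ 2)).aestronglyMeasurable
  · rw [norm_exp, Real.exp_le_one_iff, ← ofReal_pow, re_mul_ofReal, neg_re]
    exact mul_nonpos_of_nonpos_of_nonneg (neg_nonpos.mpr hb) (sq_nonneg _)

variable {E : Type*} [NormedAddCommGroup E] [InnerProductSpace ℝ E]

lemma exp_mehler_eq_mul_exp_neg_norm_sub_sq (a c : ℝ) (x y : E) :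
    cexp (-(a : ℂ) * (‖x‖ ^ 2 + ‖y‖ ^ 2) + 2 * c * ⟪x, y⟫_ℝ) =
      cexp (-(c : ℂ) * ‖x - y‖ ^ 2) *
        (cexp (-((a : ℂ) - c) * ‖y‖ ^ 2) * cexp (-((a : ℂ) - c) * ‖x‖ ^ 2)) := by
  have h_norm : (‖x - y‖ ^ 2 : ℂ) = ‖x‖ ^ 2 - 2 * ⟪x, y⟫_ℝ + ‖y‖ ^ 2 := by
    exact_mod_cast norm_sub_sq_real x y
  rw [← exp_add, ← exp_add, h_norm]
  ring_nf

variable [MeasurableSpace E]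

lemma integrable_exp_inner_sub_mul_conj_mul [OpensMeasurableSpace E] [SecondCountableTopology E]
    {μ ν : Measure E} [SFinite μ] [IsFiniteMeasure ν] {g : E → ℂ} (hg : Integrable g μ) :
    Integrable (fun q : (E × E) × E ↦
      cexp (⟪q.2, q.1.1 - q.1.2⟫_ℝ * I) * (conj (g q.1.2) * g q.1.1)) ((μ.prod μ).prod ν) := by
  have hg_conj : Integrable (fun y ↦ conj (g y)) μ :=
    conjLIE.toContinuousLinearEquiv.integrable_comp_iff.mpr hg
  have hgg : Integrable (fun q : (E × E) × E ↦ conj (g q.1.2) * g q.1.1) ((μ.prod μ).prod ν) := by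
    simpa only [mul_comm] using (hg.mul_prod hg_conj).comp_fst ν
  refine hgg.bdd_mul (c := 1) ?_ (ae_of_all _ fun q ↦ (norm_exp_ofReal_mul_I _).le)
  exact (by fun_prop : Continuous fun q : (E × E) × E ↦
    cexp (⟪q.2, q.1.1 - q.1.2⟫_ℝ * I)).aestronglyMeasurable

theorem integral_charFun_sub_mul_conj_mul [OpensMeasurableSpace E] [SecondCountableTopology E]
    {μ ν : Measure E} [SFinite μ] [IsFiniteMeasure ν] {g : E → ℂ} (hg : Integrable g μ) :
    ∫ x, ∫ y, charFun ν (x - y) * (conj (g y) * g x) ∂μ ∂μ =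
      ∫ s, (‖∫ x, cexp (⟪s, x⟫_ℝ * I) * g x ∂μ‖ ^ 2 : ℂ) ∂ν := by
  have h_int := integrable_exp_inner_sub_mul_conj_mul (ν := ν) hg
  have h_charFun (p : E × E) : charFun ν (p.1 - p.2) * (conj (g p.2) * g p.1) =
      ∫ s, cexp (⟪s, p.1 - p.2⟫_ℝ * I) * (conj (g p.2) * g p.1) ∂ν :=
    (integral_mul_const _ _).symm
  have h_factor (s : E) (p : E × E) :
      cexp (⟪s, p.1 - p.2⟫_ℝ * I) * (conj (g p.2) * g p.1) =
        cexp (⟪s, p.1⟫_ℝ * I) * g p.1 * conj (cexp (⟪s, p.2⟫_ℝ * I) * g p.2) := by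
    simp only [inner_sub_right, ofReal_sub, sub_mul, exp_sub, map_mul, ← exp_conj, conj_ofReal,
      conj_I, mul_neg, exp_neg]
    ring
  calc ∫ x, ∫ y, charFun ν (x - y) * (conj (g y) * g x) ∂μ ∂μ
    _ = ∫ p : E × E, charFun ν (p.1 - p.2) * (conj (g p.2) * g p.1) ∂μ.prod μ := by
      rw [integral_prod]
      simpa only [h_charFun] using h_int.integral_prod_left
    _ = ∫ s, ∫ p : E × E,
        cexp (⟪s, p.1 - p.2⟫_ℝ * I) * (conj (g p.2) * g p.1) ∂μ.prod μ ∂ν := by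
      simp only [h_charFun]
      exact integral_integral_swap h_int
    _ = ∫ s, (‖∫ x, cexp (⟪s, x⟫_ℝ * I) * g x ∂μ‖ ^ 2 : ℂ) ∂ν := by
      congr with s
      simp only [h_factor]
      rw [integral_prod_mul (fun x ↦ cexp (⟪s, x⟫_ℝ * I) * g x)
        (fun y ↦ conj (cexp (⟪s, y⟫_ℝ * I) * g y)), integral_conj, mul_conj']

theorem integral_charFun_sub_mul_conj_mul_nonneg [OpensMeasurableSpace E]
    [SecondCountableTopology E] {μ ν : Measure E} [SFinite μ] [IsFiniteMeasure ν]
    {g : E → ℂ} (hg : Integrable g μ) :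
    0 ≤ ∫ x, ∫ y, charFun ν (x - y) * (conj (g y) * g x) ∂μ ∂μ := by
  rw [integral_charFun_sub_mul_conj_mul hg]
  exact integral_nonneg fun s ↦ by positivity

lemma charFun_map_smul_stdGaussian [BorelSpace E] [FiniteDimensional ℝ E] {c : ℝ}
    (hc : 0 ≤ c) (t : E) :
    charFun ((stdGaussian E).map (√(2 * c) • ·)) t = cexp (-(c : ℂ) * ‖t‖ ^ 2) := by
  have h_sq : (√(2 * c) : ℂ) ^ 2 = 2 * c := by
    exact_mod_cast Real.sq_sqrt (by positivity : 0 ≤ 2 * c)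
  rw [charFun_map_smul, charFun_stdGaussian, norm_smul, Real.norm_of_nonneg (Real.sqrt_nonneg _),
    ofReal_mul, mul_pow, h_sq]
  ring_nf

theorem gaussian_kernel_positive_definite_general [BorelSpace E] [FiniteDimensional ℝ E]
    {μ : Measure E} [SFinite μ] {a c : ℝ} (hc : 0 ≤ c) {f : E → ℂ}
    (hf : Integrable (fun x ↦ cexp (-((a : ℂ) - c) * ‖x‖ ^ 2) * f x) μ) :
    0 ≤ ∫ x, ∫ y, cexp (-(a : ℂ) * (‖x‖ ^ 2 + ‖y‖ ^ 2) + 2 * c * ⟪x, y⟫_ℝ) *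
      conj (f y) * f x ∂μ ∂μ := by
  have h_nonneg := integral_charFun_sub_mul_conj_mul_nonneg
    (ν := (stdGaussian E).map (√(2 * c) • ·)) hf
  convert h_nonneg using 5 with x y
  rw [charFun_map_smul_stdGaussian hc, exp_mehler_eq_mul_exp_neg_norm_sub_sq]
  simp only [map_mul, ← exp_conj, map_neg, map_sub, map_pow, conj_ofReal]
  ring

end GaussianKernel

/-- **Positive definiteness of the Mehler-type Gaussian kernel** (key step in the proof of
the paper's Lemma 3.3): for `a > c ≥ 0` and integrable `f : ℝ → ℂ`, the double integral
`∫∫ exp(−a(x²+y²)+2cxy) conj(f(y)) f(x) dx dy` is real and nonnegative. -/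
theorem gaussian_kernel_positive_definite (a c : ℝ) (hc : 0 ≤ c) (hac : c < a)
    (f : ℝ → ℂ) (hf : Integrable f) :
    (∫ x : ℝ, ∫ y : ℝ,
        Complex.exp (-(a : ℂ) * (x ^ 2 + y ^ 2) + 2 * c * x * y) *
          (starRingEnd ℂ) (f y) * f x).im = 0 ∧
      0 ≤ (∫ x : ℝ, ∫ y : ℝ,
        Complex.exp (-(a : ℂ) * (x ^ 2 + y ^ 2) + 2 * c * x * y) *
          (starRingEnd ℂ) (f y) * f x).re := by
  have h_nonneg := gaussian_kernel_positive_definite_general hc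
    (integrable_exp_neg_mul_norm_sq_mul (b := a - c) hf (by simpa using hac.le))
  simpa [Complex.nonneg_iff, Real.inner_apply, -RCLike.inner_apply, ← ofReal_pow, mul_assoc,
    and_comm, eq_comm] using h_nonneg
end
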